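/- (Theorem 1.1, second part: quantitative positivity for small times.) Let d ≥ 1 and 0 < m < 1. There exist positive constants c₀′ and C₁′ depending only on d and m with the following property. Let u be a classical solution of the FDE ∂ₜu = Δ(u^m) on (0,T)×Ω taking nonnegative initial data u₀ ∈ L¹_loc(Ω) and having finite extinction time T, and let x₀ ∈ Ω, R > 0 be such that the closed ball of radius 3R about x₀ is contained in Ω. Set t_* = c₀′ R^{2−d(1−m)} ‖u₀‖_{L¹(B_R(x₀))}^{1−m}. Then t_* ≤ T, and for every t ∈ (0, t_*]: u(t,x₀)^m ≥ C₁′ R^{2−d} ‖u₀‖_{L¹(B_R(x₀))} T^{−1/(1−m)} t^{m/(1−m)}. -/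

import Mathlib

open MeasureTheory Metric Set Real

/-- The spatial Laplacian of `f : ℝ^d → ℝ` at a point, as the sum of second
coordinate derivatives. -/
noncomputable def spaceLap {d : ℕ} (f : EuclideanSpace ℝ (Fin d) → ℝ)
    (x : EuclideanSpace ℝ (Fin d)) : ℝ :=
  ∑ i : Fin d, fderiv ℝ (fun y => fderiv ℝ f y (EuclideanSpace.single i 1)) x
    (EuclideanSpace.single i 1)

/-- `u` is a classical solution of the fast diffusion equation `∂ₜ u = Δ(u^m)`
on the space-time set `Q`: it is positive and smooth on `Q` and satisfies the
equation pointwise on `Q`. -/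
def IsFDESol {d : ℕ} (m : ℝ) (Q : Set (ℝ × EuclideanSpace ℝ (Fin d)))
    (u : ℝ → EuclideanSpace ℝ (Fin d) → ℝ) : Prop :=
  (∀ p ∈ Q, 0 < u p.1 p.2) ∧
  ContDiffOn ℝ (⊤ : ℕ∞) (fun p : ℝ × EuclideanSpace ℝ (Fin d) => u p.1 p.2) Q ∧
  ∀ p ∈ Q, deriv (fun s => u s p.2) p.1 = spaceLap (fun y => u p.1 y ^ m) p.2

/-- `u` (defined for `0 < t < T` on `Ω`) takes the initial data `u₀`:
it extends continuously to `{0} × Ω` with value `u₀` there. -/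
def TakesInit {d : ℕ} (T : ℝ) (Ω : Set (EuclideanSpace ℝ (Fin d)))
    (u : ℝ → EuclideanSpace ℝ (Fin d) → ℝ) (u₀ : EuclideanSpace ℝ (Fin d) → ℝ) : Prop :=
  ContinuousOn (fun p : ℝ × EuclideanSpace ℝ (Fin d) => u p.1 p.2) (Ico 0 T ×ˢ Ω) ∧
  ∀ x ∈ Ω, u 0 x = u₀ x

/-- `u` has finite extinction time `T` on `Ω`: it extends continuously to
`{T} × Ω` with value `0` there, while `u(t,·)` is not identically zero for `0 < t < T`. -/
def ExtinctAt {d : ℕ} (T : ℝ) (Ω : Set (EuclideanSpace ℝ (Fin d)))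
    (u : ℝ → EuclideanSpace ℝ (Fin d) → ℝ) : Prop :=
  ContinuousOn (fun p : ℝ × EuclideanSpace ℝ (Fin d) => u p.1 p.2) (Ioc 0 T ×ˢ Ω) ∧
  (∀ x ∈ Ω, u T x = 0) ∧
  ∀ t ∈ Ioo 0 T, ∃ x ∈ Ω, u t x ≠ 0

set_option linter.unusedSectionVars false

lemma fde_dini (f : ℝ → ℝ) (a b c : ℝ) (hab : a ≤ b) (hc : 0 ≤ c)
    (hf : ContinuousOn f (Icc a b))
    (H : ∀ t ∈ Ioc a b, f t ≤ f a → ∀ ε > 0, ∃ h0 > 0, ∀ h, 0 < h → h < h0 → h ≤ t - a →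
      f t - f (t - h) ≥ -h * (c + ε)) : f b ≥ f a - c * (b - a) := by
  by_contra hcon
  push Not at hcon
  have hlt : a < b := by
    rcases hab.eq_or_lt with h | h
    · subst h; simp at hcon
    · exact h
  obtain ⟨ε, hε, hε2⟩ : ∃ ε > 0, f b < f a - (c + ε) * (b - a) := by
    refine ⟨(f a - c * (b - a) - f b) / (2 * (b - a)), ?_, ?_⟩
    · have : 0 < b - a := by linarith
      apply div_pos <;> linarith
    · have h1 : 0 < b - a := by linarith
      have : (f a - c * (b - a) - f b) / (2 * (b - a)) * (b - a) = (f a - c * (b - a) - f b) / 2 := by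
        field_simp
      rw [add_mul, this]; linarith
  obtain ⟨t, ht, hmin⟩ := isCompact_Icc.exists_isMinOn (nonempty_Icc.2 hab)
    (f := fun t => f t + (c + ε) * (t - a)) (by fun_prop)
  have hb := hmin (right_mem_Icc.2 hab)
  have ha := hmin (left_mem_Icc.2 hab)
  simp only [mem_ofPred_eq] at hb ha
  have hta : a < t := by
    rcases ht.1.eq_or_lt with h | h
    · subst h; simp at hb; linarith
    · exact h
  have h1 : 0 ≤ (c + ε) * (t - a) := by
    apply mul_nonneg <;> linarith
  obtain ⟨h0, hh0, hh⟩ := H t ⟨hta, ht.2⟩ (by linarith) (ε / 2) (by linarith)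
  set h := min (h0 / 2) (t - a) with hdef
  have hpos : 0 < h := lt_min (by linarith) (by linarith)
  have hle : h ≤ t - a := min_le_right _ _
  have h2 := hh h hpos (lt_of_le_of_lt (min_le_left _ _) (by linarith)) hle
  have h3 := hmin (show t - h ∈ Icc a b from ⟨by linarith, by linarith [ht.2]⟩)
  simp only [mem_ofPred_eq] at h3
  nlinarith

lemma fde_sd1 (f f' f'' : ℝ → ℝ) (r c ε : ℝ) (hr : 0 < r)
    (h1 : ∀ y ∈ Icc (-r) r, HasDerivAt f (f' y) y)
    (h2 : ∀ y ∈ Icc (-r) r, HasDerivAt f' (f'' y) y)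
    (h3 : ∀ y ∈ Icc (-r) r, |f'' y - c| ≤ ε) :
    |f r + f (-r) - 2 * f 0 - r ^ 2 * c| ≤ 2 * ε * r ^ 2 := by
  have hε : 0 ≤ ε := le_trans (abs_nonneg _) (h3 0 ⟨by linarith, by linarith⟩)
  have key : ∀ y ∈ Icc (0:ℝ) r, |f' y - f' (-y) - 2 * y * c| ≤ 2 * ε * r := by
    intro y hy
    have := (convex_Icc (-r) r).norm_image_sub_le_of_norm_hasDerivWithin_le
      (f := fun y => f' y - c * y) (f' := fun y => f'' y - c) (C := ε)
      (fun x hx => by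
        have := ((h2 x hx).sub ((hasDerivAt_id x).const_mul c)).hasDerivWithinAt (s := Icc (-r) r)
        exact this.congr_deriv (by simp))
      (fun x hx => by simpa using h3 x hx)
      (show -y ∈ Icc (-r) r from ⟨by linarith [hy.2], by linarith [hy.1]⟩)
      (show y ∈ Icc (-r) r from ⟨by linarith [hy.1], by linarith [hy.2]⟩)
    rw [Real.norm_eq_abs, Real.norm_eq_abs] at this
    have e1 : f' y - c * y - (f' (-y) - c * -y) = f' y - f' (-y) - 2 * y * c := by ring
    have e2 : |y - -y| = 2 * y := by rw [abs_of_nonneg (by linarith [hy.1])]; ring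
    rw [e1, e2] at this
    nlinarith [hy.2]
  have := (convex_Icc (0:ℝ) r).norm_image_sub_le_of_norm_hasDerivWithin_le
      (f := fun y => f y + f (-y) - c * y ^ 2) (f' := fun y => f' y - f' (-y) - 2 * y * c)
      (C := 2 * ε * r)
      (fun x hx => by
        have a1 := h1 x ⟨by linarith [hx.1], by linarith [hx.2]⟩
        have a2 := h1 (-x) ⟨by linarith [hx.2], by linarith [hx.1]⟩
        have a3 : HasDerivAt (fun y => f (-y)) (f' (-x) * -1) x :=
          a2.comp x (hasDerivAt_neg x)
        have := ((a1.add a3).sub ((hasDerivAt_pow 2 x).const_mul c)).hasDerivWithinAt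
          (s := Icc 0 r)
        refine this.congr_deriv ?_
        push_cast; ring)
      (fun x hx => by simpa using key x hx)
      (show (0:ℝ) ∈ Icc 0 r from ⟨le_rfl, hr.le⟩) (show r ∈ Icc 0 r from ⟨hr.le, le_rfl⟩)
  rw [Real.norm_eq_abs, Real.norm_eq_abs] at this
  have e1 : f r + f (-r) - c * r ^ 2 - (f 0 + f (-0) - c * 0 ^ 2)
    = f r + f (-r) - 2 * f 0 - r ^ 2 * c := by rw [neg_zero]; ring
  rw [e1, sub_zero, abs_of_pos hr] at this
  nlinarith

section
variable {X : Type*} [NormedAddCommGroup X] [NormedSpace ℝ X] [ProperSpace X]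

lemma fde_unif (Q C : Set X) (hQ : IsOpen Q) (hC : IsCompact C) (hCQ : C ⊆ Q)
    (H : X → ℝ) (hH : ContinuousOn H Q) (ε : ℝ) (hε : 0 < ε) :
    ∃ r0 > 0, ∀ p ∈ C, ∀ q, dist q p < r0 → q ∈ Q ∧ |H q - H p| ≤ ε := by
  obtain ⟨δ, hδ, hsub⟩ := hC.exists_cthickening_subset_open hQ hCQ
  have hu := (hC.cthickening (r := δ)).uniformContinuousOn_of_continuous (hH.mono hsub)
  rw [Metric.uniformContinuousOn_iff] at hu
  obtain ⟨δ', hδ', hu⟩ := hu ε hε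
  refine ⟨min δ δ', lt_min hδ hδ', fun p hp q hq => ?_⟩
  have hq1 : q ∈ cthickening δ C :=
    mem_cthickening_of_dist_le q p δ C hp (hq.le.trans (min_le_left _ _))
  refine ⟨hsub hq1, ?_⟩
  have := hu q hq1 p (self_subset_cthickening C hp) (lt_of_lt_of_le hq (min_le_right _ _))
  rw [Real.dist_eq] at this
  exact this.le

lemma fde_shift (F : X → ℝ) (g : ℝ) (p e : X) (y : ℝ)
    (h : HasDerivAt (fun r : ℝ => F ((p + y • e) + r • e)) g 0) :
    HasDerivAt (fun r : ℝ => F (p + r • e)) g y := by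
  have h' : HasDerivAt (fun r : ℝ => F ((p + y • e) + r • e)) g (y - y) := by simpa using h
  have := HasDerivAt.comp (h := fun z : ℝ => z - y) y h' ((hasDerivAt_id y).sub_const y)
  simp only [mul_one] at this
  refine this.congr_of_eventuallyEq (Filter.Eventually.of_forall fun r => ?_)
  simp only [Function.comp, id]
  congr 1
  rw [add_assoc, ← add_smul]; congr 2; ring

lemma fde_SD (Q C : Set X) (hQ : IsOpen Q) (hC : IsCompact C) (hCQ : C ⊆ Q) (e : X)
    (he : ‖e‖ ≤ 1) (F G H : X → ℝ)
    (h1 : ∀ p ∈ Q, HasDerivAt (fun r : ℝ => F (p + r • e)) (G p) 0)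
    (h2 : ∀ p ∈ Q, HasDerivAt (fun r : ℝ => G (p + r • e)) (H p) 0)
    (hH : ContinuousOn H Q) (ε : ℝ) (hε : 0 < ε) :
    ∃ r0 > 0, ∀ r, 0 < r → r < r0 → ∀ p ∈ C,
      |F (p + r • e) + F (p - r • e) - 2 * F p - r ^ 2 * H p| ≤ ε * r ^ 2 := by
  obtain ⟨r0, hr0, hu⟩ := fde_unif Q C hQ hC hCQ H hH (ε / 2) (by linarith)
  refine ⟨r0, hr0, fun r hr hrr p hp => ?_⟩
  have hq : ∀ y ∈ Icc (-r) r, dist (p + y • e) p < r0 := by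
    intro y hy
    rw [dist_eq_norm, add_sub_cancel_left, norm_smul, Real.norm_eq_abs]
    have : |y| ≤ r := abs_le.2 hy
    nlinarith [abs_nonneg y, norm_nonneg e]
  have := fde_sd1 (fun y => F (p + y • e)) (fun y => G (p + y • e)) (fun y => H (p + y • e))
    r (H p) (ε / 2) hr
    (fun y hy => fde_shift F _ p e y (h1 _ (hu p hp _ (hq y hy)).1))
    (fun y hy => fde_shift G _ p e y (h2 _ (hu p hp _ (hq y hy)).1))
    (fun y hy => (hu p hp _ (hq y hy)).2)
  simp only [neg_smul, zero_smul, add_zero, ← sub_eq_add_neg] at this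
  convert this using 1; ring

lemma fde_FD (Q C : Set X) (hQ : IsOpen Q) (hC : IsCompact C) (hCQ : C ⊆ Q) (e : X)
    (he : ‖e‖ ≤ 1) (F G : X → ℝ)
    (h1 : ∀ p ∈ Q, HasDerivAt (fun r : ℝ => F (p + r • e)) (G p) 0)
    (hG : ContinuousOn G Q) (ε : ℝ) (hε : 0 < ε) :
    ∃ r0 > 0, ∀ r, 0 < r → r < r0 → ∀ p ∈ C,
      |F p - F (p - r • e) - r * G p| ≤ ε * r := by
  obtain ⟨r0, hr0, hu⟩ := fde_unif Q C hQ hC hCQ G hG ε hε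
  refine ⟨r0, hr0, fun r hr hrr p hp => ?_⟩
  have hq : ∀ y ∈ Icc (-r) 0, dist (p + y • e) p < r0 := by
    intro y hy
    rw [dist_eq_norm, add_sub_cancel_left, norm_smul, Real.norm_eq_abs]
    have : |y| ≤ r := abs_le.2 ⟨hy.1, by linarith [hy.2]⟩
    nlinarith [abs_nonneg y, norm_nonneg e]
  have := (convex_Icc (-r) (0:ℝ)).norm_image_sub_le_of_norm_hasDerivWithin_le
      (f := fun y => F (p + y • e) - G p * y) (f' := fun y => G (p + y • e) - G p)
      (C := ε)
      (fun y hy => by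
        have a1 := fde_shift F _ p e y (h1 _ (hu p hp _ (hq y hy)).1)
        have := (a1.sub ((hasDerivAt_id y).const_mul (G p))).hasDerivWithinAt (s := Icc (-r) 0)
        exact this.congr_deriv (by simp))
      (fun y hy => by simpa using (hu p hp _ (hq y hy)).2)
      (show -r ∈ Icc (-r) 0 from ⟨le_rfl, by linarith⟩)
      (show (0:ℝ) ∈ Icc (-r) 0 from ⟨by linarith, le_rfl⟩)
  simp only [neg_smul, zero_smul, add_zero, ← sub_eq_add_neg, Real.norm_eq_abs, mul_zero, sub_zero,
    sub_neg_eq_add, zero_add, abs_of_pos hr] at this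
  convert this using 2; ring

lemma fde_dirderiv (Q : Set X) (hQ : IsOpen Q) (f : X → ℝ) (hf : ContDiffOn ℝ (⊤ : ℕ∞) f Q)
    (e : X) : ContDiffOn ℝ (⊤ : ℕ∞) (fun p => fderiv ℝ f p e) Q ∧
    ∀ p ∈ Q, HasDerivAt (fun r : ℝ => f (p + r • e)) (fderiv ℝ f p e) 0 := by
  constructor
  · have : ContDiffOn ℝ (⊤ : ℕ∞) (fderiv ℝ f) Q := hf.fderiv_of_isOpen hQ (by simp)
    exact this.clm_apply contDiffOn_const
  · intro p hp
    have h1 : HasFDerivAt f (fderiv ℝ f p) (p + (0:ℝ) • e) := by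
      simpa using ((hf.contDiffAt (hQ.mem_nhds hp)).differentiableAt (by simp)).hasFDerivAt
    have h2 : HasDerivAt (fun r : ℝ => p + r • e) e 0 := by
      simpa using ((hasDerivAt_id (0:ℝ)).smul_const e).const_add p
    exact h1.comp_hasDerivAt (0:ℝ) h2
end

lemma fde_ev (P : ℝ → Prop) :
    (∃ r0 > 0, ∀ r, 0 < r → r < r0 → P r) ↔ ∀ᶠ r in nhdsWithin (0:ℝ) (Ioi 0), P r := by
  rw [(nhdsGT_basis (0:ℝ)).eventually_iff]
  simp only [mem_Ioo, and_imp, gt_iff_lt]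

/-- undivided discrete Laplacian -/
noncomputable def fdeDL {d : ℕ} (r : ℝ) (f : EuclideanSpace ℝ (Fin d) → ℝ)
    (x : EuclideanSpace ℝ (Fin d)) : ℝ :=
  ∑ i : Fin d, (f (x + r • EuclideanSpace.single i 1) + f (x - r • EuclideanSpace.single i 1)
    - 2 * f x)

lemma fde_reg {d : ℕ} (m T : ℝ) (Ω : Set (EuclideanSpace ℝ (Fin d))) (hΩ : IsOpen Ω)
    (u : ℝ → EuclideanSpace ℝ (Fin d) → ℝ) (hu : IsFDESol m (Ioo 0 T ×ˢ Ω) u) :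
    ∃ ut : ℝ × EuclideanSpace ℝ (Fin d) → ℝ, ∀ C : Set (ℝ × EuclideanSpace ℝ (Fin d)),
      IsCompact C → C ⊆ Ioo 0 T ×ˢ Ω → ∀ ε > 0,
      (∃ r0 > 0, ∀ r, 0 < r → r < r0 → ∀ p ∈ C,
        fdeDL r (fun y => u p.1 y ^ m) p.2 ≤ r ^ 2 * (ut p + ε)) ∧
      (∃ h0 > 0, ∀ h, 0 < h → h < h0 → ∀ p ∈ C,
        u p.1 p.2 - u (p.1 - h) p.2 ≥ h * (ut p - ε)) := by
  obtain ⟨hpos, hsm, heq⟩ := hu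
  have hQ : IsOpen (Ioo 0 T ×ˢ Ω) := isOpen_Ioo.prod hΩ
  set Q := Ioo 0 T ×ˢ Ω with hQdef
  set f : ℝ × EuclideanSpace ℝ (Fin d) → ℝ := fun p => u p.1 p.2 with hf
  set F : ℝ × EuclideanSpace ℝ (Fin d) → ℝ := fun p => u p.1 p.2 ^ m with hF
  have hFs : ContDiffOn ℝ (⊤ : ℕ∞) F Q := hsm.rpow_const_of_ne (fun p hp => (hpos p hp).ne')
  set e : Fin d → ℝ × EuclideanSpace ℝ (Fin d) := fun i => (0, EuclideanSpace.single i 1) with he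
  have hen : ∀ i, ‖e i‖ ≤ 1 := by intro i; simp [he]
  set G : Fin d → ℝ × EuclideanSpace ℝ (Fin d) → ℝ := fun i p => fderiv ℝ F p (e i) with hG
  set H : Fin d → ℝ × EuclideanSpace ℝ (Fin d) → ℝ := fun i p => fderiv ℝ (G i) p (e i) with hH
  have hGs : ∀ i, ContDiffOn ℝ (⊤ : ℕ∞) (G i) Q := fun i => (fde_dirderiv Q hQ F hFs (e i)).1
  have slice : ∀ (g : ℝ × EuclideanSpace ℝ (Fin d) → ℝ), ContDiffOn ℝ (⊤ : ℕ∞) g Q →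
      ∀ p ∈ Q, ∀ i : Fin d, fderiv ℝ (fun y => g (p.1, y)) p.2 (EuclideanSpace.single i 1)
        = fderiv ℝ g p (e i) := by
    intro g hg p hp i
    have h1 : HasFDerivAt g (fderiv ℝ g p) (p.1, p.2) :=
      ((hg.contDiffAt (hQ.mem_nhds hp)).differentiableAt (by simp)).hasFDerivAt
    have h2 := h1.comp p.2 (hasFDerivAt_prodMk_right p.1 p.2)
    have h3 : fderiv ℝ (fun y => g (p.1, y)) p.2 = _ := h2.fderiv
    rw [h3]
    simp [he]
  have hlap : ∀ p ∈ Q, deriv (fun s => u s p.2) p.1 = ∑ i, H i p := by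
    intro p hp
    rw [heq p hp, spaceLap]
    refine Finset.sum_congr rfl fun i _ => ?_
    change _ = fderiv ℝ (G i) p (e i)
    rw [← slice (G i) (hGs i) p hp i]
    have hev : (fun y => fderiv ℝ (fun y => u p.1 y ^ m) y (EuclideanSpace.single i 1))
        =ᶠ[nhds p.2] fun y => G i (p.1, y) := by
      filter_upwards [hΩ.mem_nhds hp.2] with y hy
      exact slice F hFs (p.1, y) ⟨hp.1, hy⟩ i
    rw [hev.fderiv_eq]
  obtain ⟨hts, htd⟩ := fde_dirderiv Q hQ f hsm (1, 0)
  have htime : ∀ p ∈ Q, fderiv ℝ f p (1, 0) = ∑ i, H i p := by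
    intro p hp
    rw [← hlap p hp]
    have h1 := htd p hp
    have h2 : HasDerivAt (fun r : ℝ => f ((0, p.2) + r • (1, 0))) (fderiv ℝ f p (1, 0)) p.1 := by
      apply fde_shift
      simpa using h1
    have h3 : HasDerivAt (fun s => u s p.2) (fderiv ℝ f p (1, 0)) p.1 := by
      simpa [hf] using h2
    exact h3.deriv.symm
  refine ⟨fun p => fderiv ℝ f p (1, 0), fun C hC hCQ ε hε => ⟨?_, ?_⟩⟩
  · have hd1 : (0:ℝ) < d + 1 := by positivity
    have hi : ∀ i, ∀ᶠ r in nhdsWithin (0:ℝ) (Ioi 0), ∀ p ∈ C,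
      |F (p + r • e i) + F (p - r • e i) - 2 * F p - r ^ 2 * H i p| ≤ (ε / (d + 1)) * r ^ 2 := by
      intro i
      rw [← fde_ev]
      exact fde_SD Q C hQ hC hCQ (e i) (hen i) F (G i) (H i)
        (fde_dirderiv Q hQ F hFs (e i)).2 (fde_dirderiv Q hQ (G i) (hGs i) (e i)).2
        (fde_dirderiv Q hQ (G i) (hGs i) (e i)).1.continuousOn _ (by positivity)
    rw [fde_ev]
    filter_upwards [Filter.eventually_all.2 hi] with r hr p hp
    rw [htime p (hCQ hp), fdeDL, mul_add, Finset.mul_sum]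
    have : ∀ i, (u p.1 (p.2 + r • EuclideanSpace.single i 1) ^ m
      + u p.1 (p.2 - r • EuclideanSpace.single i 1) ^ m - 2 * u p.1 p.2 ^ m)
      ≤ r ^ 2 * H i p + (ε / (d + 1)) * r ^ 2 := by
      intro i
      have := (abs_le.1 (hr i p hp)).2
      simp [hF, he] at this
      linarith
    calc _ ≤ ∑ i, (r ^ 2 * H i p + (ε / (d + 1)) * r ^ 2) := Finset.sum_le_sum fun i _ => this i
      _ = ∑ i, r ^ 2 * H i p + d * (ε / (d + 1) * r ^ 2) := by
        rw [Finset.sum_add_distrib]; simp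
      _ ≤ _ := by
        have : d * (ε / (d + 1)) ≤ ε := by
          rw [← mul_div_assoc, div_le_iff₀ hd1]; nlinarith
        nlinarith [sq_nonneg r]
  · obtain ⟨h0, hh0, hh⟩ := fde_FD Q C hQ hC hCQ (1, 0) (by simp) f _ htd
      hts.continuousOn ε hε
    refine ⟨h0, hh0, fun h hp hlt p hpC => ?_⟩
    have := (abs_le.1 (hh h hp hlt p hpC)).1
    simp [hf] at this
    linarith

lemma fde_v {X : Type*} [TopologicalSpace X] (K : Set X) (hK : IsCompact K) (hKne : K.Nonempty)
    (T1 p : ℝ) (hT : 0 ≤ T1) (hp : 0 < p) (w : ℝ → X → ℝ)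
    (hw : ContinuousOn (fun q : ℝ × X => w q.1 q.2) (Icc 0 T1 ×ˢ K))
    (hpos : ∀ t ∈ Icc 0 T1, ∀ x ∈ K, 0 < w t x) :
    ∃ l0, 0 < l0 ∧ l0 ≤ 1 ∧ ∃ v : ℝ → X → ℝ,
      (∀ t ∈ Icc 0 T1, ∀ x ∈ K, ∀ l ∈ Ioc (0:ℝ) 1, v t x ≤ l ^ (-p) * w (l * t) x) ∧
      (∀ t ∈ Icc 0 T1, ∀ x ∈ K, ∃ l ∈ Icc l0 1, v t x = l ^ (-p) * w (l * t) x) ∧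
      ContinuousOn (fun q : ℝ × X => v q.1 q.2) (Icc 0 T1 ×ˢ K) := by
  have hcomp : IsCompact (Icc 0 T1 ×ˢ K) := isCompact_Icc.prod hK
  have hne : (Icc 0 T1 ×ˢ K).Nonempty := (nonempty_Icc.2 hT).prod hKne
  obtain ⟨a, ha, hamin⟩ := hcomp.exists_isMinOn hne hw
  obtain ⟨b, hb, hbmax⟩ := hcomp.exists_isMaxOn hne hw
  set δ := w a.1 a.2 with hδ
  set M := w b.1 b.2 with hM
  have hδpos : 0 < δ := hpos _ ha.1 _ ha.2
  have hδM : δ ≤ M := hamin hb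
  have hMpos : 0 < M := hδpos.trans_le hδM
  set l0 := (δ / M) ^ (1 / p) with hl0
  have hl0pos : 0 < l0 := by positivity
  have hl01 : l0 ≤ 1 := Real.rpow_le_one (by positivity) ((div_le_one hMpos).2 hδM) (by positivity)
  have hl0p : l0 ^ (-p) = M / δ := by
    rw [hl0, ← Real.rpow_mul (by positivity)]
    have : 1 / p * -p = -1 := by field_simp
    rw [this, Real.rpow_neg_one, inv_div]
  have hmem : ∀ t ∈ Icc 0 T1, ∀ l ∈ Ioc (0:ℝ) 1, l * t ∈ Icc 0 T1 := fun t ht l hl =>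
    ⟨mul_nonneg hl.1.le ht.1, by nlinarith [hl.2, ht.1, ht.2, hl.1]⟩
  set g : ↥(Icc 0 T1 ×ˢ K) → Icc l0 1 → ℝ :=
    fun q l => (l:ℝ) ^ (-p) * w (l * q.1.1) q.1.2 with hg
  have hgc : Continuous (fun z : ↥(Icc 0 T1 ×ˢ K) × Icc l0 1 => g z.1 z.2) := by
    have h1 : Continuous fun z : ↥(Icc 0 T1 ×ˢ K) × Icc l0 1 => (z.2 : ℝ) ^ (-p) := by
      refine Continuous.rpow_const (by fun_prop) fun z => Or.inl ?_
      exact (hl0pos.trans_le z.2.2.1).ne'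
    have h2 : Continuous fun z : ↥(Icc 0 T1 ×ˢ K) × Icc l0 1 => w (z.2 * z.1.1.1) z.1.1.2 := by
      refine hw.comp_continuous
        (f := fun z : ↥(Icc 0 T1 ×ˢ K) × Icc l0 1 => ((z.2:ℝ) * z.1.1.1, z.1.1.2)) (by fun_prop) ?_
      intro z
      exact ⟨hmem _ z.1.2.1 _ ⟨hl0pos.trans_le z.2.2.1, z.2.2.2⟩, z.1.2.2⟩
    exact h1.mul h2
  have hcont := (isCompact_univ (X := Icc l0 1)).continuous_sInf (f := g) hgc
  have : Nonempty (Icc l0 1) := ⟨⟨1, hl01, le_rfl⟩⟩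
  have hatt : ∀ q, ∃ l, sInf (g q '' univ) = g q l ∧ ∀ l', g q l ≤ g q l' := by
    intro q
    obtain ⟨l, -, h1, h2⟩ := (isCompact_univ (X := Icc l0 1)).exists_sInf_image_eq_and_le
      univ_nonempty (f := g q)
      (hgc.comp (Continuous.prodMk_right q)).continuousOn
    exact ⟨l, h1, fun l' => h2 l' (mem_univ _)⟩
  set v : ℝ → X → ℝ := fun t x => sInf ((fun l : Icc l0 1 => (l:ℝ) ^ (-p) * w (l * t) x) '' univ)
    with hv
  refine ⟨l0, hl0pos, hl01, v, ?_, ?_, ?_⟩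
  · intro t ht x hx l hl
    obtain ⟨l1, h1, h2⟩ := hatt ⟨(t, x), ht, hx⟩
    change v t x = _ at h1
    rw [h1]
    by_cases hll : l0 ≤ l
    · exact h2 ⟨l, hll, hl.2⟩
    · push Not at hll
      refine (h2 ⟨1, hl01, le_rfl⟩).trans ?_
      have h3 : l0 ^ (-p) ≤ l ^ (-p) := Real.rpow_le_rpow_of_nonpos hl.1 hll.le (by linarith)
      have h4 : δ ≤ w (l * t) x := hamin (show (l * t, x) ∈ _ from ⟨hmem t ht l hl, hx⟩)
      have h5 : w t x ≤ M := hbmax (show (t, x) ∈ _ from ⟨ht, hx⟩)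
      simp only [hg, Real.one_rpow, one_mul]
      calc w t x ≤ M := h5
        _ = l0 ^ (-p) * δ := by rw [hl0p]; field_simp
        _ ≤ _ := mul_le_mul h3 h4 hδpos.le (Real.rpow_nonneg hl.1.le _)
  · intro t ht x hx
    obtain ⟨l1, h1, h2⟩ := hatt ⟨(t, x), ht, hx⟩
    exact ⟨l1, l1.2, h1⟩
  · rw [continuousOn_iff_continuous_domRestrict]
    exact hcont

lemma fde_super {d : ℕ} (m T : ℝ) (hm0 : 0 < m) (hm1 : m < 1)
    (Ω : Set (EuclideanSpace ℝ (Fin d))) (hΩ : IsOpen Ω)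
    (u : ℝ → EuclideanSpace ℝ (Fin d) → ℝ) (hu : IsFDESol m (Ioo 0 T ×ˢ Ω) u)
    (x₀ : EuclideanSpace ℝ (Fin d)) (R : ℝ) (hR : 0 < R) (hsub : closedBall x₀ (3 * R) ⊆ Ω)
    (s0 T1 : ℝ) (hs0 : 0 < s0) (hT1 : 0 ≤ T1) (hsT : s0 + T1 < T) :
    ∃ v : ℝ → EuclideanSpace ℝ (Fin d) → ℝ,
      (∀ t ∈ Icc 0 T1, ∀ x ∈ closedBall x₀ (3 * R), ∀ l ∈ Ioc (0:ℝ) 1,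
        v t x ≤ l ^ (-(1 / (1 - m))) * u (s0 + l * t) x) ∧
      (∀ t ∈ Icc 0 T1, ∀ x ∈ closedBall x₀ (3 * R), 0 < v t x) ∧
      (∀ x ∈ closedBall x₀ (3 * R), v 0 x = u s0 x) ∧
      ContinuousOn (fun q : ℝ × EuclideanSpace ℝ (Fin d) => v q.1 q.2)
        (Icc 0 T1 ×ˢ closedBall x₀ (3 * R)) ∧
      (∀ ε > 0, ∃ r0 > 0, ∃ h0 > 0, ∀ r, 0 < r → r < r0 → ∀ h, 0 < h → h < h0 →
        ∀ t ∈ Icc 0 T1, h ≤ t → ∀ x ∈ closedBall x₀ (5 / 2 * R),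
        v t x - v (t - h) x ≥ h * (fdeDL r (fun y => v t y ^ m) x / r ^ 2 - ε)) := by
  obtain ⟨ut, hut⟩ := fde_reg m T Ω hΩ u hu
  obtain ⟨hpos, hsm, -⟩ := hu
  set p := 1 / (1 - m) with hp
  have h1m : 0 < 1 - m := by linarith
  have hp0 : 0 < p := by positivity
  set K := closedBall x₀ (3 * R) with hK
  have hmem : ∀ s ∈ Icc 0 T1, ∀ x ∈ K, (s0 + s, x) ∈ Ioo 0 T ×ˢ Ω := fun s hs x hx =>
    ⟨⟨by linarith [hs.1], by linarith [hs.2]⟩, hsub hx⟩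
  have hwc : ContinuousOn (fun q : ℝ × EuclideanSpace ℝ (Fin d) => u (s0 + q.1) q.2)
      (Icc 0 T1 ×ˢ K) := by
    refine hsm.continuousOn.comp
      (f := fun q : ℝ × EuclideanSpace ℝ (Fin d) => (s0 + q.1, q.2)) (by fun_prop) ?_
    intro q hq
    exact hmem q.1 hq.1 q.2 hq.2
  have hwpos : ∀ s ∈ Icc 0 T1, ∀ x ∈ K, 0 < u (s0 + s) x := fun s hs x hx =>
    hpos _ (hmem s hs x hx)
  obtain ⟨l0, hl0, hl01, v, hv1, hv2, hv3⟩ := fde_v K (isCompact_closedBall _ _)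
    ⟨x₀, mem_closedBall_self (by positivity)⟩ T1 p hT1 hp0 (fun s x => u (s0 + s) x) hwc hwpos
  have hlt : ∀ t ∈ Icc 0 T1, ∀ l ∈ Icc l0 1, l * t ∈ Icc 0 T1 := fun t ht l hl => by
    have : 0 < l := hl0.trans_le hl.1
    exact ⟨mul_nonneg this.le ht.1, by nlinarith [hl.2, ht.1, ht.2]⟩
  refine ⟨v, hv1, ?_, ?_, hv3, ?_⟩
  · intro t ht x hx
    obtain ⟨l, hl, h⟩ := hv2 t ht x hx
    rw [h]
    exact mul_pos (Real.rpow_pos_of_pos (hl0.trans_le hl.1) _) (hwpos _ (hlt t ht l hl) x hx)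
  · intro x hx
    have h0 : (0:ℝ) ∈ Icc 0 T1 := ⟨le_rfl, hT1⟩
    apply le_antisymm
    · simpa using hv1 0 h0 x hx 1 ⟨one_pos, le_rfl⟩
    · obtain ⟨l, hl, h⟩ := hv2 0 h0 x hx
      rw [h, mul_zero]
      have h1 : 1 ≤ l ^ (-p) := Real.one_le_rpow_of_pos_of_le_one_of_nonpos
        (hl0.trans_le hl.1) hl.2 (by linarith)
      have h2 := hwpos 0 h0 x hx
      simp only [add_zero] at h2 ⊢
      nlinarith
  · intro ε hε
    set B := l0 ^ (-(p * m)) with hB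
    have hBpos : 0 < B := Real.rpow_pos_of_pos hl0 _
    have hsub2 : closedBall x₀ (5 / 2 * R) ⊆ K := closedBall_subset_closedBall (by linarith)
    set C := Icc s0 (s0 + T1) ×ˢ closedBall x₀ (5 / 2 * R) with hC
    have hCc : IsCompact C := isCompact_Icc.prod (isCompact_closedBall _ _)
    have hCQ : C ⊆ Ioo 0 T ×ˢ Ω := by
      intro q hq
      exact ⟨⟨by linarith [hq.1.1], by linarith [hq.1.2]⟩, hsub (hsub2 hq.2)⟩
    set ε1 := ε / (2 * B) with hε1
    have hε1p : 0 < ε1 := by positivity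
    obtain ⟨⟨r0, hr0, hr⟩, h0, hh0, hh⟩ := hut C hCc hCQ ε1 hε1p
    refine ⟨min r0 (R / 2), lt_min hr0 (by linarith), h0, hh0, ?_⟩
    intro r hrp hrlt h hhp hhlt t ht hht x hx
    obtain ⟨l, hl, hvl⟩ := hv2 t ht x (hsub2 hx)
    have hlp : 0 < l := hl0.trans_le hl.1
    have hlt' := hlt t ht l hl
    have hq : (s0 + l * t, x) ∈ C := ⟨⟨by linarith [hlt'.1], by linarith [hlt'.2]⟩, hx⟩
    have hDL := hr r hrp (hrlt.trans_le (min_le_left _ _)) _ hq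
    have hlh : l * h < h0 := by nlinarith [hl.2]
    have hTD := hh (l * h) (mul_pos hlp hhp) hlh _ hq
    simp only at hDL hTD
    set a := l ^ (-(p * m)) with ha
    have hapos : 0 < a := Real.rpow_pos_of_pos hlp _
    have haB : a ≤ B := Real.rpow_le_rpow_of_nonpos hl0 hl.1 (by
      have := mul_pos hp0 hm0; linarith)
    have hpow : ∀ y ∈ K, (l ^ (-p) * u (s0 + l * t) y) ^ m = a * u (s0 + l * t) y ^ m := by
      intro y hy
      rw [Real.mul_rpow (Real.rpow_nonneg hlp.le _) (hwpos _ hlt' y hy).le, ← Real.rpow_mul hlp.le,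
        neg_mul]
    have hvm : ∀ y ∈ K, v t y ^ m ≤ a * u (s0 + l * t) y ^ m := by
      intro y hy
      rw [← hpow y hy]
      have h1 := hv1 t ht y hy l ⟨hlp, hl.2⟩
      refine Real.rpow_le_rpow ?_ h1 hm0.le
      obtain ⟨l', hl', h'⟩ := hv2 t ht y hy
      rw [h']
      exact (mul_pos (Real.rpow_pos_of_pos (hl0.trans_le hl'.1) _)
        (hwpos _ (hlt t ht l' hl') y hy)).le
    have hvx : v t x ^ m = a * u (s0 + l * t) x ^ m := by
      rw [hvl]; exact hpow x (hsub2 hx)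
    have hrR : r < R / 2 := hrlt.trans_le (min_le_right _ _)
    have hnear : ∀ z : EuclideanSpace ℝ (Fin d), ‖z‖ ≤ r → x + z ∈ K := by
      intro z hz
      rw [hK, mem_closedBall, dist_eq_norm]
      have h1 : ‖x - x₀‖ ≤ 5 / 2 * R := by rw [← dist_eq_norm]; exact hx
      calc ‖x + z - x₀‖ = ‖(x - x₀) + z‖ := by congr 1; abel
        _ ≤ ‖x - x₀‖ + ‖z‖ := norm_add_le _ _
        _ ≤ _ := by linarith
    have hDLv : fdeDL r (fun y => v t y ^ m) x ≤ a * fdeDL r (fun y => u (s0 + l * t) y ^ m) x := by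
      unfold fdeDL
      rw [Finset.mul_sum]
      refine Finset.sum_le_sum fun i _ => ?_
      have hn : ‖r • (EuclideanSpace.single i (1:ℝ) : EuclideanSpace ℝ (Fin d))‖ ≤ r := by
        simp [norm_smul, abs_of_pos hrp]
      have h1 := hvm _ (hnear _ hn)
      have h2 := hvm _ (hnear (-(r • EuclideanSpace.single i (1:ℝ))) (by rw [norm_neg]; exact hn))
      rw [← sub_eq_add_neg] at h2
      simp only
      rw [hvx]
      linarith
    have h1 : fdeDL r (fun y => v t y ^ m) x / r ^ 2 ≤ a * (ut (s0 + l * t, x) + ε1) := by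
      rw [div_le_iff₀ (by positivity)]
      calc _ ≤ _ := hDLv
        _ ≤ a * (r ^ 2 * (ut (s0 + l * t, x) + ε1)) := by gcongr
        _ = _ := by ring
    have h2 := hv1 (t - h) ⟨by linarith, by linarith [ht.2]⟩ x (hsub2 hx) l ⟨hlp, hl.2⟩
    have h3 : s0 + l * (t - h) = s0 + l * t - l * h := by ring
    simp only [h3] at h2
    have h4 : l ^ (-p) * l = a := by
      rw [ha]
      nth_rewrite 2 [← Real.rpow_one l]
      rw [← Real.rpow_add hlp]
      congr 1
      rw [hp]; field_simp; ring
    have h5 : 0 < l ^ (-p) := Real.rpow_pos_of_pos hlp _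
    have h6 : l ^ (-p) * (u (s0 + l * t) x - u (s0 + l * t - l * h) x)
        ≥ a * h * (ut (s0 + l * t, x) - ε1) := by
      calc _ ≥ l ^ (-p) * (l * h * (ut (s0 + l * t, x) - ε1)) := by gcongr
        _ = (l ^ (-p) * l) * h * (ut (s0 + l * t, x) - ε1) := by ring
        _ = _ := by rw [h4]
    have h7 : a * ε1 ≤ ε / 2 := by
      calc a * ε1 ≤ B * ε1 := by gcongr
        _ = ε / 2 := by rw [hε1]; field_simp
    have h8 : h * (fdeDL r (fun y => v t y ^ m) x / r ^ 2 - ε)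
        ≤ a * h * (ut (s0 + l * t, x) - ε1) := by
      calc _ ≤ h * (a * (ut (s0 + l * t, x) + ε1) - ε) := by gcongr
        _ ≤ h * (a * (ut (s0 + l * t, x) - ε1)) := by gcongr; linarith
        _ = _ := by ring
    rw [hvl]
    linarith

lemma fde_test {d : ℕ} (x₀ : EuclideanSpace ℝ (Fin d)) (R : ℝ) (_hR : 0 < R)
    (W φ L : EuclideanSpace ℝ (Fin d) → ℝ)
    (hW : ContinuousOn W (closedBall x₀ (3 * R))) (hW0 : ∀ x ∈ closedBall x₀ (3 * R), 0 ≤ W x)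
    (hφ : Continuous φ) (hφ0 : ∀ x, 0 ≤ φ x) (hφs : ∀ x ∉ closedBall x₀ (5 / 2 * R), φ x = 0)
    (hL : ContinuousOn L (closedBall x₀ (5 / 2 * R))) (r : ℝ) (hr : 0 < r) (hrR : r < R / 2)
    (hDL : ∀ x ∈ closedBall x₀ (5 / 2 * R), fdeDL r φ x ≥ -r ^ 2 * L x) :
    IntegrableOn (fun x => fdeDL r W x * φ x) (closedBall x₀ (5 / 2 * R)) ∧
    ∫ x in closedBall x₀ (5 / 2 * R), fdeDL r W x * φ x ≥
      - r ^ 2 * ∫ x in closedBall x₀ (5 / 2 * R), W x * L x := by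
  set K := closedBall x₀ (3 * R) with hK
  set K' := closedBall x₀ (5 / 2 * R) with hK'
  have hsub2 : K' ⊆ K := closedBall_subset_closedBall (by linarith)
  have hKm : MeasurableSet K := measurableSet_closedBall
  have hKm' : MeasurableSet K' := measurableSet_closedBall
  have hKc : IsCompact K := isCompact_closedBall _ _
  have hKc' : IsCompact K' := isCompact_closedBall _ _
  set V := K.indicator W with hV
  have hVi : Integrable V := (integrable_indicator_iff hKm).2 (hW.integrableOn_compact hKc)
  have hV0 : ∀ x, 0 ≤ V x := fun x => indicator_nonneg hW0 x
  have hVK : ∀ x ∈ K, V x = W x := fun x hx => indicator_of_mem hx _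
  have hφcs : HasCompactSupport φ := HasCompactSupport.intro hKc' hφs
  obtain ⟨Cφ, hCφ⟩ := hφcs.exists_bound_of_continuous hφ
  have hI : ∀ a, Integrable (fun x => V x * φ (x + a)) := fun a =>
    hVi.mul_bdd (by fun_prop) (Filter.Eventually.of_forall fun x => hCφ _)
  have hI2 : ∀ a, Integrable (fun x => V (x + a) * φ x) := fun a => by
    have := (hI (-a)).comp_add_right a
    simpa using this
  have hT : ∀ a, ∫ x, V (x + a) * φ x = ∫ x, V x * φ (x - a) := fun a => by
    have := integral_add_right_eq_self (μ := volume) (fun x => V x * φ (x - a)) a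
    simpa using this
  have hT' : ∀ a, ∫ x, V (x - a) * φ x = ∫ x, V x * φ (x + a) := fun a => by
    simpa [sub_eq_add_neg] using hT (-a)
  have hI' : ∀ a, Integrable (fun x => V x * φ (x - a)) := fun a => by
    simpa [sub_eq_add_neg] using hI (-a)
  have hI2' : ∀ a, Integrable (fun x => V (x - a) * φ x) := fun a => by
    simpa [sub_eq_add_neg] using hI2 (-a)
  have hI0 : Integrable (fun x => V x * φ x) := by simpa using hI 0
  set e : Fin d → EuclideanSpace ℝ (Fin d) := fun i => r • EuclideanSpace.single i 1 with he
  have hterm1 : ∀ i, Integrable (fun x => V (x + e i) * φ x + V (x - e i) * φ x - 2 * (V x * φ x)) :=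
    fun i => ((hI2 (e i)).add (hI2' (e i))).sub (hI0.const_mul 2)
  have hterm2 : ∀ i, Integrable (fun x => V x * φ (x + e i) + V x * φ (x - e i) - 2 * (V x * φ x)) :=
    fun i => ((hI (e i)).add (hI' (e i))).sub (hI0.const_mul 2)
  have e1 : (fun x => fdeDL r V x * φ x) = fun x => ∑ i, (V (x + e i) * φ x + V (x - e i) * φ x
      - 2 * (V x * φ x)) := by
    ext x; unfold fdeDL; rw [Finset.sum_mul]
    exact Finset.sum_congr rfl fun i _ => by simp only [he]; ring
  have e2 : (fun x => V x * fdeDL r φ x) = fun x => ∑ i, (V x * φ (x + e i) + V x * φ (x - e i)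
      - 2 * (V x * φ x)) := by
    ext x; unfold fdeDL; rw [Finset.mul_sum]
    exact Finset.sum_congr rfl fun i _ => by simp only [he]; ring
  have hint1 : Integrable (fun x => fdeDL r V x * φ x) := by
    rw [e1]; exact integrable_finsetSum _ fun i _ => hterm1 i
  have hint2 : Integrable (fun x => V x * fdeDL r φ x) := by
    rw [e2]; exact integrable_finsetSum _ fun i _ => hterm2 i
  have hparts : ∫ x, fdeDL r V x * φ x = ∫ x, V x * fdeDL r φ x := by
    rw [e1, e2, integral_finsetSum _ fun i _ => hterm1 i, integral_finsetSum _ fun i _ => hterm2 i]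
    refine Finset.sum_congr rfl fun i _ => ?_
    have hs : ∀ f g k : EuclideanSpace ℝ (Fin d) → ℝ, Integrable f → Integrable g → Integrable k →
        ∫ x, (f x + g x - 2 * k x) = (∫ x, f x) + (∫ x, g x) - 2 * ∫ x, k x := by
      intro f g k hf hg hk
      have h1 : ∫ x, (f x + g x - 2 * k x) = (∫ x, (f x + g x)) - ∫ x, 2 * k x :=
        integral_sub (hf.add hg) (hk.const_mul 2)
      rw [h1, integral_add hf hg, integral_const_mul]
    rw [hs _ _ _ (hI2 (e i)) (hI2' (e i)) hI0, hs _ _ _ (hI (e i)) (hI' (e i)) hI0, hT, hT']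
    ring
  have hDLeq : ∀ x ∈ K', fdeDL r W x * φ x = fdeDL r V x * φ x := by
    intro x hx
    congr 1
    have hnear : ∀ z : EuclideanSpace ℝ (Fin d), ‖z‖ ≤ r → x + z ∈ K := by
      intro z hz
      rw [hK, mem_closedBall, dist_eq_norm]
      have h1 : ‖x - x₀‖ ≤ 5 / 2 * R := by rw [← dist_eq_norm]; exact hx
      calc ‖x + z - x₀‖ = ‖(x - x₀) + z‖ := by congr 1; abel
        _ ≤ ‖x - x₀‖ + ‖z‖ := norm_add_le _ _
        _ ≤ _ := by linarith
    unfold fdeDL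
    refine Finset.sum_congr rfl fun i _ => ?_
    have hn : ‖r • (EuclideanSpace.single i (1:ℝ) : EuclideanSpace ℝ (Fin d))‖ ≤ r := by
      simp [norm_smul, abs_of_pos hr]
    have h2 := hnear (-(r • EuclideanSpace.single i (1:ℝ))) (by rw [norm_neg]; exact hn)
    rw [← sub_eq_add_neg] at h2
    rw [hVK _ (hnear _ hn), hVK _ h2, hVK _ (hsub2 hx)]
  have hon : IntegrableOn (fun x => fdeDL r V x * φ x) K' := hint1.integrableOn
  refine ⟨hon.congr_fun (fun x hx => (hDLeq x hx).symm) hKm', ?_⟩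
  rw [setIntegral_congr_fun hKm' hDLeq]
  have h3 : ∫ x in K', fdeDL r V x * φ x = ∫ x, fdeDL r V x * φ x := by
    apply setIntegral_eq_integral_of_forall_compl_eq_zero
    intro x hx; rw [hφs x hx, mul_zero]
  rw [h3, hparts]
  have hWL : IntegrableOn (fun x => W x * L x) K' :=
    ((hW.mono hsub2).mul hL).integrableOn_compact hKc'
  have h4 : ∫ x in K', V x * fdeDL r φ x ≤ ∫ x, V x * fdeDL r φ x := by
    rw [← integral_add_compl hKm' hint2]
    have : 0 ≤ ∫ x in K'ᶜ, V x * fdeDL r φ x := by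
      apply setIntegral_nonneg hKm'.compl
      intro x hx
      apply mul_nonneg (hV0 x)
      unfold fdeDL
      apply Finset.sum_nonneg
      intro i _
      rw [hφs x hx]
      have := hφ0 (x + r • EuclideanSpace.single i 1)
      have := hφ0 (x - r • EuclideanSpace.single i 1)
      linarith
    linarith
  refine le_trans ?_ h4
  rw [← integral_const_mul]
  apply setIntegral_mono_on (hWL.const_mul _) hint2.integrableOn hKm'
  intro x hx
  rw [hVK x (hsub2 hx)]
  have := mul_le_mul_of_nonneg_left (hDL x hx) (hW0 x (hsub2 hx))
  linarith

lemma fde_cont_int {X : Type*} [PseudoMetricSpace X] [MeasurableSpace X] [OpensMeasurableSpace X]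
    [SecondCountableTopology X]
    (μ : Measure X) [IsFiniteMeasureOnCompacts μ] (K : Set X) (hK : IsCompact K)
    (hKm : MeasurableSet K) (a b : ℝ) (f : ℝ → X → ℝ)
    (hf : ContinuousOn (fun q : ℝ × X => f q.1 q.2) (Icc a b ×ˢ K)) :
    ContinuousOn (fun t => ∫ x in K, f t x ∂μ) (Icc a b) := by
  obtain ⟨M, hM⟩ := (isCompact_Icc.prod hK).exists_bound_of_continuousOn hf
  refine continuousOn_of_dominated (bound := fun _ => M) ?_ ?_ ?_ ?_
  · intro t ht
    have : ContinuousOn (f t) K := hf.comp (f := fun x => (t, x)) (by fun_prop)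
      (fun x hx => ⟨ht, hx⟩)
    exact this.aestronglyMeasurable hKm
  · intro t ht
    filter_upwards [ae_restrict_mem hKm] with x hx
    exact hM (t, x) ⟨ht, hx⟩
  · exact integrableOn_const hK.measure_lt_top.ne
  · filter_upwards [ae_restrict_mem hKm] with x hx
    exact hf.comp (f := fun t => (t, x)) (by fun_prop) (fun t ht => ⟨ht, hx⟩)

lemma fde_Ydini {d : ℕ} (m : ℝ) (hm0 : 0 < m)
    (x₀ : EuclideanSpace ℝ (Fin d)) (R : ℝ) (hR : 0 < R) (T1 : ℝ)
    (v : ℝ → EuclideanSpace ℝ (Fin d) → ℝ)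
    (hvpos : ∀ t ∈ Icc 0 T1, ∀ x ∈ closedBall x₀ (3 * R), 0 < v t x)
    (hvc : ContinuousOn (fun q : ℝ × EuclideanSpace ℝ (Fin d) => v q.1 q.2)
        (Icc 0 T1 ×ˢ closedBall x₀ (3 * R)))
    (hvD : ∀ ε > 0, ∃ r0 > 0, ∃ h0 > 0, ∀ r, 0 < r → r < r0 → ∀ h, 0 < h → h < h0 →
        ∀ t ∈ Icc 0 T1, h ≤ t → ∀ x ∈ closedBall x₀ (5 / 2 * R),
        v t x - v (t - h) x ≥ h * (fdeDL r (fun y => v t y ^ m) x / r ^ 2 - ε))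
    (φ L : EuclideanSpace ℝ (Fin d) → ℝ)
    (hφ : Continuous φ) (hφ0 : ∀ x, 0 ≤ φ x) (hφs : ∀ x ∉ closedBall x₀ (5 / 2 * R), φ x = 0)
    (hL : ContinuousOn L (closedBall x₀ (5 / 2 * R)))
    (hDL : ∀ η > 0, ∃ r0 > 0, ∀ r, 0 < r → r < r0 → ∀ x ∈ closedBall x₀ (5 / 2 * R),
      fdeDL r φ x ≥ -r ^ 2 * (L x + η)) :
    ContinuousOn (fun t => ∫ x in closedBall x₀ (5 / 2 * R), v t x * φ x) (Icc 0 T1) ∧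
    ∀ t ∈ Ioc 0 T1, ∀ ε > 0, ∃ h0 > 0, ∀ h, 0 < h → h < h0 → h ≤ t →
      (∫ x in closedBall x₀ (5 / 2 * R), v t x * φ x)
        - (∫ x in closedBall x₀ (5 / 2 * R), v (t - h) x * φ x)
        ≥ -h * ((∫ x in closedBall x₀ (5 / 2 * R), v t x ^ m * L x) + ε) := by
  set K := closedBall x₀ (3 * R) with hK
  set K' := closedBall x₀ (5 / 2 * R) with hK'
  have hsub2 : K' ⊆ K := closedBall_subset_closedBall (by linarith)
  have hKm' : MeasurableSet K' := measurableSet_closedBall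
  have hKc' : IsCompact K' := isCompact_closedBall _ _
  constructor
  · apply fde_cont_int volume K' hKc' hKm'
    exact (hvc.mono (prod_mono_right hsub2)).mul (by fun_prop)
  intro t ht ε hε
  have htI : t ∈ Icc 0 T1 := ⟨ht.1.le, ht.2⟩
  have hvt : ∀ s ∈ Icc 0 T1, ContinuousOn (v s) K := fun s hs =>
    hvc.comp (f := fun x => (s, x)) (by fun_prop) (fun x hx => ⟨hs, hx⟩)
  have hvm : ContinuousOn (fun x => v t x ^ m) K :=
    (hvt t htI).rpow_const fun x hx => Or.inl (hvpos t htI x hx).ne'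
  set S1 := ∫ x in K', v t x ^ m with hS1
  set S2 := ∫ x in K', φ x with hS2
  have hS1p : 0 ≤ S1 := setIntegral_nonneg hKm' fun x hx =>
    Real.rpow_nonneg (hvpos t htI x (hsub2 hx)).le _
  have hS2p : 0 ≤ S2 := setIntegral_nonneg hKm' fun x hx => hφ0 x
  set η := ε / (2 * (S1 + 1)) with hη
  set ε' := ε / (2 * (S2 + 1)) with hε'
  have hηp : 0 < η := by positivity
  have hεp : 0 < ε' := by positivity
  have hη1 : η * S1 ≤ ε / 2 := by
    rw [hη, div_mul_eq_mul_div, div_le_iff₀ (by positivity)]; nlinarith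
  have hε1 : ε' * S2 ≤ ε / 2 := by
    rw [hε', div_mul_eq_mul_div, div_le_iff₀ (by positivity)]; nlinarith
  obtain ⟨r0, hr0, h0, hh0, hD⟩ := hvD ε' hεp
  obtain ⟨r1, hr1, hD1⟩ := hDL η hηp
  obtain ⟨r, hr, hrlt⟩ := exists_between (lt_min hr0 (lt_min hr1 (show 0 < R / 2 by linarith)))
  obtain ⟨hi, hge⟩ := fde_test x₀ R hR (fun x => v t x ^ m) φ (fun x => L x + η) hvm
    (fun x hx => Real.rpow_nonneg (hvpos t htI x hx).le _) hφ hφ0 hφs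
    (hL.add continuousOn_const) r hr
    (hrlt.trans_le ((min_le_right _ _).trans (min_le_right _ _)))
    (hD1 r hr (hrlt.trans_le ((min_le_right _ _).trans (min_le_left _ _))))
  rw [← hK'] at hi hge
  refine ⟨h0, hh0, fun h hp hlt hle => ?_⟩
  have hs : t - h ∈ Icc 0 T1 := ⟨by linarith, by linarith [ht.2]⟩
  have i1 : IntegrableOn (fun x => v t x * φ x) K' :=
    (((hvt t htI).mono hsub2).mul hφ.continuousOn).integrableOn_compact hKc'
  have i2 : IntegrableOn (fun x => v (t - h) x * φ x) K' :=
    (((hvt _ hs).mono hsub2).mul hφ.continuousOn).integrableOn_compact hKc'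
  have i3 : IntegrableOn φ K' := hφ.continuousOn.integrableOn_compact hKc'
  have i4 : IntegrableOn (fun x => v t x ^ m * L x) K' :=
    ((hvm.mono hsub2).mul hL).integrableOn_compact hKc'
  have i5 : IntegrableOn (fun x => v t x ^ m) K' := (hvm.mono hsub2).integrableOn_compact hKc'
  rw [← integral_sub i1 i2]
  have step : ∫ x in K', (h / r ^ 2 * (fdeDL r (fun y => v t y ^ m) x * φ x) - h * ε' * φ x)
      ≤ ∫ x in K', (v t x * φ x - v (t - h) x * φ x) := by
    apply setIntegral_mono_on ((hi.const_mul _).sub (i3.const_mul _)) (i1.sub i2) hKm'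
    intro x hx
    simp only [Pi.sub_apply]
    have := mul_le_mul_of_nonneg_right
      (hD r hr (hrlt.trans_le (min_le_left _ _)) h hp hlt t htI hle x hx) (hφ0 x)
    calc _ = h * (fdeDL r (fun y => v t y ^ m) x / r ^ 2 - ε') * φ x := by ring
      _ ≤ _ := by linarith
  refine le_trans ?_ step
  rw [integral_sub (hi.const_mul _) (i3.const_mul _), integral_const_mul, integral_const_mul]
  have e1 : ∫ x in K', v t x ^ m * (L x + η) = (∫ x in K', v t x ^ m * L x) + η * S1 := by
    rw [hS1, ← integral_const_mul, ← integral_add i4 (i5.const_mul _)]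
    congr 1; ext x; ring
  rw [e1] at hge
  have h5 : h / r ^ 2 * (∫ x in K', fdeDL r (fun y => v t y ^ m) x * φ x)
      ≥ h / r ^ 2 * (-r ^ 2 * ((∫ x in K', v t x ^ m * L x) + η * S1)) := by
    gcongr
  have h6 : h / r ^ 2 * (-r ^ 2 * ((∫ x in K', v t x ^ m * L x) + η * S1))
      = -h * ((∫ x in K', v t x ^ m * L x) + η * S1) := by
    field_simp
  rw [h6] at h5
  have h7 : h * (η * S1) + h * ε' * S2 ≤ h * ε := by
    have : h * (η * S1 + ε' * S2) ≤ h * ε := by gcongr; linarith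
    linarith
  nlinarith

lemma fde_nsq {d : ℕ} (ξ : EuclideanSpace ℝ (Fin d)) (r : ℝ) (i : Fin d) :
    ‖ξ + r • EuclideanSpace.single i (1:ℝ)‖ ^ 2 = ‖ξ‖ ^ 2 + 2 * r * ξ i + r ^ 2 ∧
    ‖ξ - r • EuclideanSpace.single i (1:ℝ)‖ ^ 2 = ‖ξ‖ ^ 2 - 2 * r * ξ i + r ^ 2 := by
  have h1 : inner ℝ ξ (EuclideanSpace.single i (1:ℝ)) = ξ i := by
    rw [real_inner_comm, EuclideanSpace.inner_single_left]; simp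
  constructor
  · rw [norm_add_sq_real, inner_smul_right, h1, norm_smul, mul_pow]
    simp; ring
  · rw [norm_sub_sq_real, inner_smul_right, h1, norm_smul, mul_pow]
    simp; ring

lemma fde_tan (z w : ℝ) (hz : 0 < z) : (max w 0) ^ 2 ≥ z ^ 2 + 2 * z * (w - z) := by
  rcases le_total w 0 with h | h
  · rw [max_eq_right h]; nlinarith
  · rw [max_eq_left h]; nlinarith [sq_nonneg (w - z)]

noncomputable def fdePsi {d : ℕ} (x₀ : EuclideanSpace ℝ (Fin d)) (R : ℝ)
    (x : EuclideanSpace ℝ (Fin d)) : ℝ := (max (1 - (1 / (4 * R ^ 2)) * ‖x - x₀‖ ^ 2) 0) ^ 2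

lemma fde_psi_basic {d : ℕ} (x₀ : EuclideanSpace ℝ (Fin d)) (R : ℝ) (hR : 0 < R) :
    Continuous (fdePsi x₀ R) ∧ (∀ x, 0 ≤ fdePsi x₀ R x) ∧ (∀ x, fdePsi x₀ R x ≤ 1) ∧
    (∀ x ∉ closedBall x₀ (2 * R), fdePsi x₀ R x = 0) ∧
    (∀ x ∈ ball x₀ R, 9 / 16 ≤ fdePsi x₀ R x) := by
  refine ⟨by unfold fdePsi; fun_prop, fun x => sq_nonneg _, ?_, ?_, ?_⟩
  · intro x
    have h : 0 ≤ (1 / (4 * R ^ 2)) * ‖x - x₀‖ ^ 2 := by positivity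
    unfold fdePsi
    apply pow_le_one₀ (le_max_right _ _)
    apply max_le <;> linarith
  · intro x hx
    rw [mem_closedBall, dist_eq_norm, not_le] at hx
    unfold fdePsi
    rw [max_eq_right]
    · simp
    rw [one_div, inv_mul_eq_div, sub_nonpos, le_div_iff₀ (by positivity)]
    nlinarith
  · intro x hx
    rw [mem_ball, dist_eq_norm] at hx
    unfold fdePsi
    have h2 : 3 / 4 ≤ 1 - (1 / (4 * R ^ 2)) * ‖x - x₀‖ ^ 2 := by
      have : (1 / (4 * R ^ 2)) * ‖x - x₀‖ ^ 2 ≤ 1 / 4 := by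
        rw [one_div, inv_mul_eq_div, div_le_iff₀ (by positivity)]
        nlinarith [norm_nonneg (x - x₀)]
      linarith
    have h3 := h2.trans (le_max_left _ 0)
    nlinarith

lemma fde_psi_DL {d : ℕ} (x₀ : EuclideanSpace ℝ (Fin d)) (R : ℝ) (hR : 0 < R) :
    ∀ η > 0, ∃ r0 > 0, ∀ r, 0 < r → r < r0 → ∀ x ∈ closedBall x₀ (5 / 2 * R),
      fdeDL r (fdePsi x₀ R) x
        ≥ -r ^ 2 * (((d + 2 : ℝ) ^ 2 / (8 * R ^ 2)) * fdePsi x₀ R x + η) := by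
  intro η hη
  obtain ⟨a, ha⟩ : ∃ a, a = 1 / (4 * R ^ 2) := ⟨_, rfl⟩
  have hap : 0 < a := by rw [ha]; positivity
  set δ := η / (4 * a * (d + 1)) with hδ
  have hδp : 0 < δ := by positivity
  refine ⟨min 1 (δ / (a * (4 * R + 1))), by positivity, fun r hr hr0 x _ => ?_⟩
  have hr1 : r < 1 := hr0.trans_le (min_le_left _ _)
  have hr2 : r < δ / (a * (4 * R + 1)) := hr0.trans_le (min_le_right _ _)
  rw [lt_div_iff₀ (by positivity)] at hr2
  have hpsi : ∀ y, fdePsi x₀ R y = (max (1 - a * ‖y - x₀‖ ^ 2) 0) ^ 2 := fun y => by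
    rw [ha]; rfl
  have hLa : ((d + 2 : ℝ) ^ 2 / (8 * R ^ 2)) = a * ((d + 2) ^ 2 / 2) := by
    rw [ha]; field_simp; norm_num
  rw [hLa]
  obtain ⟨z, hz⟩ : ∃ z, z = 1 - a * ‖x - x₀‖ ^ 2 := ⟨_, rfl⟩
  have hp : ∀ i, fdePsi x₀ R (x + r • EuclideanSpace.single i 1)
      = (max (z - a * (2 * r * (x - x₀) i + r ^ 2)) 0) ^ 2 := fun i => by
    rw [hpsi, add_sub_right_comm, (fde_nsq (x - x₀) r i).1, hz]; ring_nf
  have hm : ∀ i, fdePsi x₀ R (x - r • EuclideanSpace.single i 1)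
      = (max (z - a * (-(2 * r * (x - x₀) i) + r ^ 2)) 0) ^ 2 := fun i => by
    rw [hpsi, sub_right_comm, (fde_nsq (x - x₀) r i).2, hz]; ring_nf
  have h0 : fdePsi x₀ R x = (max z 0) ^ 2 := by rw [hpsi, hz]
  unfold fdeDL
  simp only [hp, hm, h0]
  rcases le_or_gt z 0 with hz0 | hz0
  · rw [max_eq_right hz0]
    have : 0 ≤ ∑ i : Fin d, ((max (z - a * (2 * r * (x - x₀) i + r ^ 2)) 0) ^ 2 +
      (max (z - a * (-(2 * r * (x - x₀) i) + r ^ 2)) 0) ^ 2 - 2 * (0:ℝ) ^ 2) :=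
      Finset.sum_nonneg fun i _ => by
        have := sq_nonneg (max (z - a * (2 * r * (x - x₀) i + r ^ 2)) 0)
        have := sq_nonneg (max (z - a * (-(2 * r * (x - x₀) i) + r ^ 2)) 0)
        linarith
    have h3 : 0 < r ^ 2 * η := by positivity
    refine le_trans ?_ this
    calc _ = -(r ^ 2 * η) := by ring
      _ ≤ 0 := by linarith
  rw [max_eq_left hz0.le]
  rcases le_or_gt z δ with hzd | hzd
  · have : ∑ i : Fin d, ((max (z - a * (2 * r * (x - x₀) i + r ^ 2)) 0) ^ 2 +
      (max (z - a * (-(2 * r * (x - x₀) i) + r ^ 2)) 0) ^ 2 - 2 * z ^ 2)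
      ≥ ∑ i : Fin d, (-(4 * a * z * r ^ 2)) := by
      apply Finset.sum_le_sum
      intro i _
      have h1 := fde_tan z (z - a * (2 * r * (x - x₀) i + r ^ 2)) hz0
      have h2 := fde_tan z (z - a * (-(2 * r * (x - x₀) i) + r ^ 2)) hz0
      nlinarith
    rw [Finset.sum_const, Finset.card_univ, Fintype.card_fin, nsmul_eq_mul] at this
    have h4 : 4 * a * (d + 1) * z ≤ η := by
      rw [hδ, le_div_iff₀ (by positivity)] at hzd; linarith
    have h5 : r ^ 2 * (4 * a * (d + 1) * z) ≤ r ^ 2 * η := by gcongr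
    have h6 : 0 ≤ r ^ 2 * (4 * a * z) := by positivity
    have h7 : 0 ≤ r ^ 2 * (a * ((d + 2) ^ 2 / 2) * z ^ 2) := by positivity
    nlinarith
  · have hN : ‖x - x₀‖ < 2 * R := by
      rw [hz, ha, sub_pos, one_div, inv_mul_eq_div, div_lt_one (by positivity)] at hz0
      nlinarith [norm_nonneg (x - x₀)]
    have hxi : ∀ i, |(x - x₀) i| < 2 * R := fun i => by
      have := PiLp.norm_apply_le (x - x₀) i
      rw [Real.norm_eq_abs] at this
      exact this.trans_lt hN
    have hsum : ∑ i : Fin d, ((x - x₀) i) ^ 2 = ‖x - x₀‖ ^ 2 := by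
      rw [EuclideanSpace.norm_sq_eq]; simp
    have : ∑ i : Fin d, ((max (z - a * (2 * r * (x - x₀) i + r ^ 2)) 0) ^ 2 +
      (max (z - a * (-(2 * r * (x - x₀) i) + r ^ 2)) 0) ^ 2 - 2 * z ^ 2)
      ≥ ∑ i : Fin d, (-(4 * a * z * r ^ 2) + 8 * a ^ 2 * r ^ 2 * ((x - x₀) i) ^ 2) := by
      apply Finset.sum_le_sum
      intro i _
      obtain ⟨w, hw⟩ : ∃ w, w = (x - x₀) i := ⟨_, rfl⟩
      have hw2 := hxi i
      rw [← hw, abs_lt] at hw2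
      rw [← hw]
      have k1 : 2 * r * w + r ^ 2 ≤ r * (4 * R + 1) := by nlinarith
      have k2 : -(2 * r * w) + r ^ 2 ≤ r * (4 * R + 1) := by nlinarith
      have k3 : a * (2 * r * w + r ^ 2) ≤ a * (r * (4 * R + 1)) := by gcongr
      have k4 : a * (-(2 * r * w) + r ^ 2) ≤ a * (r * (4 * R + 1)) := by gcongr
      rw [max_eq_left (by nlinarith), max_eq_left (by nlinarith)]
      have k5 : 0 ≤ 2 * a ^ 2 * r ^ 4 := by positivity
      nlinarith
    rw [Finset.sum_add_distrib, Finset.sum_const, Finset.card_univ, Fintype.card_fin,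
      nsmul_eq_mul, ← Finset.mul_sum, hsum] at this
    have e : a * ‖x - x₀‖ ^ 2 = 1 - z := by rw [hz]; ring
    have e2 : (d:ℝ) * -(4 * a * z * r ^ 2) + 8 * a ^ 2 * r ^ 2 * ‖x - x₀‖ ^ 2
        = r ^ 2 * a * (8 - (4 * d + 8) * z) := by
      rw [show 8 * a ^ 2 * r ^ 2 * ‖x - x₀‖ ^ 2 = 8 * a * r ^ 2 * (a * ‖x - x₀‖ ^ 2) by ring, e]
      ring
    rw [e2] at this
    have h8 : 0 ≤ r ^ 2 * a * ((4 - (d + 2) * z) ^ 2 / 2) := by positivity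
    have h9 : 0 < r ^ 2 * η := by positivity
    refine le_trans ?_ this
    have h10 : r ^ 2 * a * (8 - (4 * d + 8) * z)
      = r ^ 2 * a * ((4 - (d + 2) * z) ^ 2 / 2) - r ^ 2 * (a * ((d + 2) ^ 2 / 2) * z ^ 2) := by
      ring
    rw [h10]
    calc _ = - (r ^ 2 * (a * ((d + 2) ^ 2 / 2) * z ^ 2)) - r ^ 2 * η := by ring
      _ ≤ _ := by linarith

lemma fde_young (m A w : ℝ) (hm0 : 0 < m) (hm1 : m < 1) (hA : 0 < A) (hw : 0 ≤ w) :
    w ^ m ≤ A ^ (m - 1) * (m * w + (1 - m) * A) := by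
  have h := Real.geom_mean_le_arith_mean2_weighted hm0.le (by linarith : 0 ≤ 1 - m) hw hA.le
    (by ring)
  have h2 : 0 < A ^ (m - 1) := Real.rpow_pos_of_pos hA _
  have h3 : A ^ (1 - m) * A ^ (m - 1) = 1 := by
    rw [← Real.rpow_add hA]; simp
  calc w ^ m = A ^ (m - 1) * (w ^ m * A ^ (1 - m)) := by
        rw [mul_comm, mul_assoc, h3, mul_one]
    _ ≤ _ := by gcongr

lemma fde_mass {d : ℕ} (m : ℝ) (hm0 : 0 < m) (hm1 : m < 1)
    (x₀ : EuclideanSpace ℝ (Fin d)) (R : ℝ) (hR : 0 < R) (T1 : ℝ)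
    (v : ℝ → EuclideanSpace ℝ (Fin d) → ℝ)
    (hvpos : ∀ t ∈ Icc 0 T1, ∀ x ∈ closedBall x₀ (3 * R), 0 < v t x)
    (hvc : ContinuousOn (fun q : ℝ × EuclideanSpace ℝ (Fin d) => v q.1 q.2)
        (Icc 0 T1 ×ˢ closedBall x₀ (3 * R)))
    (hvD : ∀ ε > 0, ∃ r0 > 0, ∃ h0 > 0, ∀ r, 0 < r → r < r0 → ∀ h, 0 < h → h < h0 →
        ∀ t ∈ Icc 0 T1, h ≤ t → ∀ x ∈ closedBall x₀ (5 / 2 * R),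
        v t x - v (t - h) x ≥ h * (fdeDL r (fun y => v t y ^ m) x / r ^ 2 - ε))
    (Y0 P t : ℝ) (hY0 : Y0 = ∫ x in closedBall x₀ (5 / 2 * R), v 0 x * fdePsi x₀ R x)
    (hY0p : 0 < Y0) (hP : 0 < P) (hψP : ∫ x in closedBall x₀ (5 / 2 * R), fdePsi x₀ R x ≤ P)
    (ht : t ∈ Icc 0 T1)
    (ht1 : ((d + 2 : ℝ) ^ 2 / (8 * R ^ 2)) * (Y0 / P) ^ (m - 1) * t ≤ 1 / 2) :
    ∫ x in closedBall x₀ (5 / 2 * R), v t x * fdePsi x₀ R x ≥ Y0 / 2 := by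
  obtain ⟨hc, h0, h1, hs, -⟩ := fde_psi_basic x₀ R hR
  set K := closedBall x₀ (3 * R) with hK
  set K' := closedBall x₀ (5 / 2 * R) with hK'
  have hsub2 : K' ⊆ K := closedBall_subset_closedBall (by linarith)
  have hKm' : MeasurableSet K' := measurableSet_closedBall
  have hKc' : IsCompact K' := isCompact_closedBall _ _
  have hs' : ∀ x ∉ K', fdePsi x₀ R x = 0 := fun x hx => hs x fun h => hx
    (closedBall_subset_closedBall (by linarith) h)
  obtain ⟨Λ, hΛ⟩ : ∃ Λ, Λ = ((d + 2 : ℝ) ^ 2 / (8 * R ^ 2)) := ⟨_, rfl⟩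
  have hΛp : 0 < Λ := by rw [hΛ]; positivity
  obtain ⟨hYc, hYd⟩ := fde_Ydini m hm0 x₀ R hR T1 v hvpos hvc hvD (fdePsi x₀ R)
    (fun x => ((d + 2 : ℝ) ^ 2 / (8 * R ^ 2)) * fdePsi x₀ R x) hc h0 hs' (by fun_prop)
    (fde_psi_DL x₀ R hR)
  rw [← hK'] at hYc hYd
  rw [← hΛ] at ht1 hYd
  set A := Y0 / P with hA
  have hAp : 0 < A := by positivity
  have hAm : 0 < A ^ (m - 1) := Real.rpow_pos_of_pos hAp _
  have hAP : A * P = Y0 := by rw [hA]; field_simp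
  have key := fde_dini (fun t => ∫ x in K', v t x * fdePsi x₀ R x) 0 t
    (Λ * A ^ (m - 1) * Y0) ht.1 (by positivity) (hYc.mono (Icc_subset_Icc_right ht.2)) ?_
  · simp only [← hY0] at key
    nlinarith
  intro s hs hle ε hε
  simp only [← hY0] at hle
  have hsI : s ∈ Ioc 0 T1 := ⟨hs.1, hs.2.trans ht.2⟩
  have hsI' : s ∈ Icc 0 T1 := ⟨hs.1.le, hs.2.trans ht.2⟩
  obtain ⟨h0', hh0, hh⟩ := hYd s hsI ε hε
  refine ⟨h0', hh0, fun h hp hlt hle2 => ?_⟩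
  have := hh h hp hlt (by linarith)
  refine le_trans ?_ this
  have hvs : ContinuousOn (v s) K' :=
    hvc.comp (f := fun x => (s, x)) (by fun_prop) (fun x hx => ⟨hsI', hsub2 hx⟩)
  have hvm : ContinuousOn (fun x => v s x ^ m) K' :=
    hvs.rpow_const fun x hx => Or.inl (hvpos s hsI' x (hsub2 hx)).ne'
  have i1 : IntegrableOn (fun x => v s x * fdePsi x₀ R x) K' :=
    (hvs.mul hc.continuousOn).integrableOn_compact hKc'
  have i2 : IntegrableOn (fdePsi x₀ R) K' := hc.continuousOn.integrableOn_compact hKc'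
  have i3 : IntegrableOn (fun x => v s x ^ m * (Λ * fdePsi x₀ R x)) K' :=
    (hvm.mul (by fun_prop)).integrableOn_compact hKc'
  have bound : ∫ x in K', v s x ^ m * (Λ * fdePsi x₀ R x) ≤ Λ * A ^ (m - 1) * Y0 := by
    calc ∫ x in K', v s x ^ m * (Λ * fdePsi x₀ R x)
        ≤ ∫ x in K', ((Λ * A ^ (m - 1) * m) * (v s x * fdePsi x₀ R x)
            + (Λ * A ^ (m - 1) * (1 - m) * A) * fdePsi x₀ R x) := by
          apply setIntegral_mono_on i3 ((i1.const_mul _).add (i2.const_mul _)) hKm'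
          intro x hx
          have hy := fde_young m A (v s x) hm0 hm1 hAp (hvpos s hsI' x (hsub2 hx)).le
          have h5 : 0 ≤ Λ * fdePsi x₀ R x := mul_nonneg hΛp.le (h0 x)
          calc _ ≤ A ^ (m - 1) * (m * v s x + (1 - m) * A) * (Λ * fdePsi x₀ R x) := by gcongr
            _ = (Λ * A ^ (m - 1) * m) * (v s x * fdePsi x₀ R x)
              + (Λ * A ^ (m - 1) * (1 - m) * A) * fdePsi x₀ R x := by ring
      _ = (Λ * A ^ (m - 1) * m) * (∫ x in K', v s x * fdePsi x₀ R x)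
            + (Λ * A ^ (m - 1) * (1 - m) * A) * (∫ x in K', fdePsi x₀ R x) := by
          rw [integral_add (i1.const_mul _) (i2.const_mul _), integral_const_mul,
            integral_const_mul]
      _ ≤ (Λ * A ^ (m - 1) * m) * Y0 + (Λ * A ^ (m - 1) * (1 - m) * A) * P := by
          have : 0 ≤ 1 - m := by linarith
          gcongr
      _ = (Λ * A ^ (m - 1) * m) * Y0 + (Λ * A ^ (m - 1) * (1 - m)) * (A * P) := by ring
      _ = _ := by rw [hAP]; ring
  nlinarith

noncomputable def fdeg (k B s : ℝ) : ℝ := ∫ σ in s..B, σ ^ (-k)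

lemma fdeg_ii (k a b : ℝ) (ha : 0 < a) (hb : 0 < b) :
    IntervalIntegrable (fun σ : ℝ => σ ^ (-k)) volume a b := by
  apply ContinuousOn.intervalIntegrable
  intro x hx
  have : 0 < x := (lt_min ha hb).trans_le hx.1
  exact (Real.continuousAt_rpow_const _ _ (Or.inl this.ne')).continuousWithinAt

lemma fdeg_deriv (k B s : ℝ) (hB : 0 < B) (hs : 0 < s) :
    HasDerivAt (fdeg k B) (-(s ^ (-k))) s := by
  refine intervalIntegral.integral_hasDerivAt_left (fdeg_ii k s B hs hB) ?_ ?_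
  · exact (Measurable.stronglyMeasurable (by fun_prop)).stronglyMeasurableAtFilter
  · exact Real.continuousAt_rpow_const _ _ (Or.inl hs.ne')

lemma fdeg_nonpos (k B s : ℝ) (hB : 0 < B) (hs : B ≤ s) : fdeg k B s ≤ 0 := by
  unfold fdeg
  rw [intervalIntegral.integral_symm, neg_nonpos]
  apply intervalIntegral.integral_nonneg hs
  intro x hx
  exact Real.rpow_nonneg (hB.le.trans hx.1) _

lemma fdeg_lower (k B s : ℝ) (hk : 0 ≤ k) (hs0 : 0 < s) (hs : s ≤ B) :
    (B - s) * B ^ (-k) ≤ fdeg k B s := by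
  unfold fdeg
  have hB : 0 < B := hs0.trans_le hs
  have := intervalIntegral.integral_mono_on (f := fun _ => B ^ (-k)) hs (by simp)
    (fdeg_ii k s B hs0 hB) (fun x hx =>
      Real.rpow_le_rpow_of_nonpos (hs0.trans_le hx.1) hx.2 (by linarith))
  simpa using this

noncomputable def fdeG {d : ℕ} (x₀ : EuclideanSpace ℝ (Fin d)) (R ε : ℝ)
    (x : EuclideanSpace ℝ (Fin d)) : ℝ :=
  max (fdeg (d / 2) (25 / 4 * R ^ 2) (‖x - x₀‖ ^ 2 + ε ^ 2)) 0

noncomputable def fdeGL {d : ℕ} (x₀ : EuclideanSpace ℝ (Fin d)) (ε : ℝ)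
    (x : EuclideanSpace ℝ (Fin d)) : ℝ :=
  2 * d * ε ^ 2 * (‖x - x₀‖ ^ 2 + ε ^ 2) ^ (-((d : ℝ) / 2) - 1)

lemma fde_G_basic {d : ℕ} (x₀ : EuclideanSpace ℝ (Fin d)) (R ε : ℝ) (hR : 0 < R) (hε : 0 < ε)
    (hεR : ε ≤ R) :
    Continuous (fdeG x₀ R ε) ∧ (∀ x, 0 ≤ fdeG x₀ R ε x) ∧
    (∀ x ∉ closedBall x₀ (5 / 2 * R), fdeG x₀ R ε x = 0) ∧
    (∀ x, (5 / 4 * R ^ 2) * (25 / 4 * R ^ 2) ^ (-((d:ℝ) / 2)) * fdePsi x₀ R x ≤ fdeG x₀ R ε x) ∧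
    Continuous (fdeGL x₀ ε) ∧ (∀ x, 0 ≤ fdeGL x₀ ε x) := by
  have hB : 0 < 25 / 4 * R ^ 2 := by positivity
  have hs : ∀ x : EuclideanSpace ℝ (Fin d), 0 < ‖x - x₀‖ ^ 2 + ε ^ 2 := fun x => by positivity
  obtain ⟨-, p0, p1, ps, -⟩ := fde_psi_basic x₀ R hR
  have hG0 : ∀ x, 0 ≤ fdeG x₀ R ε x := fun x => le_max_right _ _
  refine ⟨?_, hG0, ?_, ?_, ?_, ?_⟩
  · rw [continuous_iff_continuousAt]
    intro x
    have hc : ContinuousAt (fun x => fdeg (d / 2) (25 / 4 * R ^ 2) (‖x - x₀‖ ^ 2 + ε ^ 2)) x := (fdeg_deriv _ _ _ hB (hs x)).continuousAt.comp (f := fun x => ‖x - x₀‖ ^ 2 + ε ^ 2)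
      (by fun_prop)
    exact hc.sup continuousAt_const
  · intro x hx
    rw [mem_closedBall, dist_eq_norm, not_le] at hx
    exact max_eq_right (fdeg_nonpos _ _ _ hB (by nlinarith))
  · intro x
    by_cases hx : x ∈ closedBall x₀ (2 * R)
    · rw [mem_closedBall, dist_eq_norm] at hx
      have h5 : ‖x - x₀‖ ^ 2 + ε ^ 2 ≤ 5 * R ^ 2 := by nlinarith [norm_nonneg (x - x₀)]
      have := fdeg_lower (d / 2) (25 / 4 * R ^ 2) _ (by positivity) (hs x) (by nlinarith)
      have hBp : 0 < (25 / 4 * R ^ 2) ^ (-((d:ℝ) / 2)) := Real.rpow_pos_of_pos hB _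
      calc _ ≤ (5 / 4 * R ^ 2) * (25 / 4 * R ^ 2) ^ (-((d:ℝ) / 2)) * 1 := by
            gcongr; exact p1 x
        _ ≤ (25 / 4 * R ^ 2 - (‖x - x₀‖ ^ 2 + ε ^ 2)) * (25 / 4 * R ^ 2) ^ (-((d:ℝ) / 2)) := by
            rw [mul_one]; gcongr; linarith
        _ ≤ _ := this
        _ ≤ _ := le_max_left _ _
    · rw [ps x hx, mul_zero]; exact hG0 x
  · unfold fdeGL
    refine continuous_const.mul ?_
    refine Continuous.rpow_const (by fun_prop) fun x => Or.inl (hs x).ne'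
  · intro x
    unfold fdeGL
    have := Real.rpow_nonneg (hs x).le (-((d : ℝ) / 2) - 1)
    positivity

lemma fde_G_DL {d : ℕ} (x₀ : EuclideanSpace ℝ (Fin d)) (R ε : ℝ) (hR : 0 < R) (hε : 0 < ε)
    (hεR : ε ≤ R) :
    ∀ η > 0, ∃ r0 > 0, ∀ r, 0 < r → r < r0 → ∀ x ∈ closedBall x₀ (5 / 2 * R),
      fdeDL r (fdeG x₀ R ε) x ≥ -r ^ 2 * (fdeGL x₀ ε x + η) := by
  intro η hη
  obtain ⟨-, hG0, -, -, -, hL0⟩ := fde_G_basic x₀ R ε hR hε hεR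
  have hB : 0 < 25 / 4 * R ^ 2 := by positivity
  have hs : ∀ x : EuclideanSpace ℝ (Fin d), 0 < ‖x - x₀‖ ^ 2 + ε ^ 2 := fun x => by positivity
  set q : EuclideanSpace ℝ (Fin d) → ℝ :=
    fun x => fdeg (d / 2) (25 / 4 * R ^ 2) (‖x - x₀‖ ^ 2 + ε ^ 2) with hq
  have hqG : ∀ x, fdeG x₀ R ε x = max (q x) 0 := fun x => rfl
  set k : ℝ := (d : ℝ) / 2 with hk
  have hsd : ∀ (i : Fin d) (x : EuclideanSpace ℝ (Fin d)), HasDerivAt (fun r : ℝ =>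
      ‖x + r • EuclideanSpace.single i (1:ℝ) - x₀‖ ^ 2 + ε ^ 2) (2 * (x - x₀) i) 0 := by
    intro i x
    have : (fun r : ℝ => ‖x + r • EuclideanSpace.single i (1:ℝ) - x₀‖ ^ 2 + ε ^ 2)
        = fun r => ‖x - x₀‖ ^ 2 + 2 * r * (x - x₀) i + r ^ 2 + ε ^ 2 := by
      ext r
      rw [add_sub_right_comm, (fde_nsq (x - x₀) r i).1]
    rw [this]
    have h1 := ((((hasDerivAt_id (0:ℝ)).const_mul 2).mul_const ((x - x₀) i)).const_add
      (‖x - x₀‖ ^ 2)).add ((hasDerivAt_id (0:ℝ)).pow 2)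
    have h2 := h1.add_const (ε ^ 2)
    exact h2.congr_deriv (by simp)
  have hxd : ∀ (i : Fin d) (x : EuclideanSpace ℝ (Fin d)), HasDerivAt (fun r : ℝ =>
      (x + r • EuclideanSpace.single i (1:ℝ) - x₀) i) 1 0 := by
    intro i x
    have : (fun r : ℝ => (x + r • EuclideanSpace.single i (1:ℝ) - x₀) i)
        = fun r => x i + r - x₀ i := by
      ext r; simp
    rw [this]
    exact ((hasDerivAt_id (0:ℝ)).const_add (x i)).sub_const (x₀ i)
  have main : ∀ i : Fin d, ∃ r0 > 0, ∀ r, 0 < r → r < r0 → ∀ x ∈ closedBall x₀ (5 / 2 * R),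
      |q (x + r • EuclideanSpace.single i 1) + q (x - r • EuclideanSpace.single i 1) - 2 * q x
        - r ^ 2 * (-2 * (‖x - x₀‖ ^ 2 + ε ^ 2) ^ (-k)
          + 2 * d * ((x - x₀) i) ^ 2 * (‖x - x₀‖ ^ 2 + ε ^ 2) ^ (-k - 1))|
        ≤ (η / (d + 1)) * r ^ 2 := by
    intro i
    refine fde_SD univ (closedBall x₀ (5 / 2 * R)) isOpen_univ (isCompact_closedBall _ _)
      (subset_univ _) (EuclideanSpace.single i 1) (by simp) q
      (fun x => -((‖x - x₀‖ ^ 2 + ε ^ 2) ^ (-k)) * (2 * (x - x₀) i)) _ ?_ ?_ ?_ _ (by positivity)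
    · intro x _
      have h1 := fdeg_deriv k (25 / 4 * R ^ 2) _ hB (hs x)
      have h2 := HasDerivAt.comp (h := fun r : ℝ =>
        ‖x + r • EuclideanSpace.single i (1:ℝ) - x₀‖ ^ 2 + ε ^ 2) (0:ℝ)
        (by simpa using h1) (hsd i x)
      exact h2.congr_deriv (by simp)
    · intro x _
      have h1 := (hsd i x).rpow_const (p := -k) (Or.inl (by simpa using (hs x).ne'))
      have h2 := h1.neg.mul ((hxd i x).const_mul 2)
      refine h2.congr_deriv ?_
      simp only [zero_smul, add_zero, Pi.neg_apply]
      rw [hk]; ring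
    · have c1 : ∀ e : ℝ, Continuous fun x : EuclideanSpace ℝ (Fin d) =>
          (‖x - x₀‖ ^ 2 + ε ^ 2) ^ e := fun e =>
        Continuous.rpow_const (by fun_prop) fun x => Or.inl (hs x).ne'
      have c2 := c1 (-k)
      have c3 := c1 (-k - 1)
      refine Continuous.continuousOn ?_
      fun_prop
  have main2 : ∃ r0 > 0, ∀ r, 0 < r → r < r0 → ∀ i : Fin d, ∀ x ∈ closedBall x₀ (5 / 2 * R),
      |q (x + r • EuclideanSpace.single i 1) + q (x - r • EuclideanSpace.single i 1) - 2 * q x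
        - r ^ 2 * (-2 * (‖x - x₀‖ ^ 2 + ε ^ 2) ^ (-k)
          + 2 * d * ((x - x₀) i) ^ 2 * (‖x - x₀‖ ^ 2 + ε ^ 2) ^ (-k - 1))|
        ≤ (η / (d + 1)) * r ^ 2 := by
    rw [fde_ev, Filter.eventually_all]
    intro i
    rw [← fde_ev]
    exact main i
  obtain ⟨r0, hr0, hr⟩ := main2
  refine ⟨r0, hr0, fun r hrp hrlt x hx => ?_⟩
  have hr2 : 0 < r ^ 2 := by positivity
  rcases le_or_gt (q x) 0 with h0 | h0
  · have : 0 ≤ fdeDL r (fdeG x₀ R ε) x := by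
      unfold fdeDL
      apply Finset.sum_nonneg
      intro i _
      have h3 : fdeG x₀ R ε x = 0 := max_eq_right h0
      rw [h3]
      have := hG0 (x + r • EuclideanSpace.single i 1)
      have := hG0 (x - r • EuclideanSpace.single i 1)
      linarith
    have h4 : 0 ≤ r ^ 2 * (fdeGL x₀ ε x + η) := by
      have := hL0 x
      positivity
    linarith
  · have h3 : fdeG x₀ R ε x = q x := max_eq_left h0.le
    obtain ⟨S, hS⟩ : ∃ S, S = ‖x - x₀‖ ^ 2 + ε ^ 2 := ⟨_, rfl⟩
    have hSp : 0 < S := hS ▸ hs x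
    have hsum : ∑ i : Fin d, ((x - x₀) i) ^ 2 = ‖x - x₀‖ ^ 2 := by
      rw [EuclideanSpace.norm_sq_eq]; simp
    have : fdeDL r (fdeG x₀ R ε) x ≥ ∑ i : Fin d, (r ^ 2 * (-2 * S ^ (-k)
          + 2 * d * ((x - x₀) i) ^ 2 * S ^ (-k - 1)) - (η / (d + 1)) * r ^ 2) := by
      unfold fdeDL
      apply Finset.sum_le_sum
      intro i _
      have h5 := (abs_le.1 (hr r hrp hrlt i x hx)).1
      rw [← hS] at h5
      rw [h3, hqG, hqG]
      have h6 := le_max_left (q (x + r • EuclideanSpace.single i 1)) 0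
      have h7 := le_max_left (q (x - r • EuclideanSpace.single i 1)) 0
      linarith
    refine le_trans ?_ this
    have e1 : S ^ (-k) = S ^ (-k - 1) * S := by
      rw [← Real.rpow_add_one hSp.ne']; congr 1; ring
    have e2 : ∑ i : Fin d, (r ^ 2 * (-2 * S ^ (-k)
          + 2 * d * ((x - x₀) i) ^ 2 * S ^ (-k - 1)) - (η / (d + 1)) * r ^ 2)
        = -r ^ 2 * (fdeGL x₀ ε x) - r ^ 2 * (d * (η / (d + 1))) := by
      have e4 : ∑ i : Fin d, 2 * (d:ℝ) * ((x - x₀) i) ^ 2 * S ^ (-k - 1)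
          = 2 * d * ‖x - x₀‖ ^ 2 * S ^ (-k - 1) := by
        rw [← hsum, Finset.mul_sum, Finset.sum_mul]
      rw [Finset.sum_sub_distrib, ← Finset.mul_sum, Finset.sum_add_distrib, e4]
      simp only [Finset.sum_const, Finset.card_univ, Fintype.card_fin, nsmul_eq_mul]
      unfold fdeGL
      rw [← hS, ← hk, e1, show ‖x - x₀‖ ^ 2 = S - ε ^ 2 by rw [hS]; ring]
      ring
    rw [e2]
    have e3 : d * (η / (d + 1)) ≤ η := by
      rw [mul_div_assoc', div_le_iff₀ (by positivity)]; nlinarith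
    nlinarith

lemma fde_mass_u {d : ℕ} (m T : ℝ) (hm0 : 0 < m) (hm1 : m < 1)
    (Ω : Set (EuclideanSpace ℝ (Fin d))) (hΩ : IsOpen Ω)
    (u : ℝ → EuclideanSpace ℝ (Fin d) → ℝ) (hu : IsFDESol m (Ioo 0 T ×ˢ Ω) u)
    (x₀ : EuclideanSpace ℝ (Fin d)) (R : ℝ) (hR : 0 < R) (hsub : closedBall x₀ (3 * R) ⊆ Ω)
    (s0 t : ℝ) (hs0 : 0 < s0) (ht0 : 0 ≤ t) (hsT : s0 + t < T)
    (Y0 P : ℝ) (hY0 : Y0 = ∫ x in closedBall x₀ (5 / 2 * R), u s0 x * fdePsi x₀ R x)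
    (hY0p : 0 < Y0) (hP : 0 < P) (hψP : ∫ x in closedBall x₀ (5 / 2 * R), fdePsi x₀ R x ≤ P)
    (ht1 : ((d + 2 : ℝ) ^ 2 / (8 * R ^ 2)) * (Y0 / P) ^ (m - 1) * t ≤ 1 / 2) :
    Y0 / 2 ≤ ∫ x in closedBall x₀ (5 / 2 * R), u (s0 + t) x * fdePsi x₀ R x := by
  obtain ⟨v, hA, hvpos, hv0, hvc, hvD⟩ :=
    fde_super m T hm0 hm1 Ω hΩ u hu x₀ R hR hsub s0 t hs0 ht0 hsT
  obtain ⟨hc, h0, -, -, -⟩ := fde_psi_basic x₀ R hR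
  have hsub2 : closedBall x₀ (5 / 2 * R) ⊆ closedBall x₀ (3 * R) :=
    closedBall_subset_closedBall (by linarith)
  have hm := fde_mass m hm0 hm1 x₀ R hR t v hvpos hvc hvD Y0 P t (by
    rw [hY0]
    apply setIntegral_congr_fun measurableSet_closedBall
    intro x hx
    simp only [hv0 x (hsub2 hx)]) hY0p hP hψP ⟨ht0, le_rfl⟩ ht1
  refine hm.trans ?_
  have c1 : ContinuousOn (v t) (closedBall x₀ (5 / 2 * R)) :=
    hvc.comp (f := fun x => (t, x)) (by fun_prop) (fun x hx => ⟨⟨ht0, le_rfl⟩, hsub2 hx⟩)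
  have c2 : ContinuousOn (u (s0 + t)) (closedBall x₀ (5 / 2 * R)) :=
    hu.2.1.continuousOn.comp (f := fun x => (s0 + t, x)) (by fun_prop)
      (fun x hx => ⟨⟨by linarith, hsT⟩, hsub (hsub2 hx)⟩)
  apply setIntegral_mono_on
    ((c1.mul hc.continuousOn).integrableOn_compact (isCompact_closedBall _ _))
    ((c2.mul hc.continuousOn).integrableOn_compact (isCompact_closedBall _ _))
    measurableSet_closedBall
  intro x hx
  have := hA t ⟨ht0, le_rfl⟩ x (hsub2 hx) 1 (by simp)
  simp only [Real.one_rpow, one_mul] at this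
  exact mul_le_mul_of_nonneg_right this (h0 x)

lemma fde_green {d : ℕ} (m T : ℝ) (hm0 : 0 < m) (hm1 : m < 1)
    (Ω : Set (EuclideanSpace ℝ (Fin d))) (hΩ : IsOpen Ω)
    (u : ℝ → EuclideanSpace ℝ (Fin d) → ℝ) (hu : IsFDESol m (Ioo 0 T ×ˢ Ω) u)
    (x₀ : EuclideanSpace ℝ (Fin d)) (R : ℝ) (hR : 0 < R) (hsub : closedBall x₀ (3 * R) ⊆ Ω)
    (s0 T1 t : ℝ) (hs0 : 0 < s0) (ht0 : 0 < t) (htT1 : t ≤ T1) (hsT : s0 + T1 < T)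
    (Y0 P : ℝ) (hY0 : Y0 = ∫ x in closedBall x₀ (5 / 2 * R), u s0 x * fdePsi x₀ R x)
    (hY0p : 0 < Y0) (hP : 0 < P) (hψP : ∫ x in closedBall x₀ (5 / 2 * R), fdePsi x₀ R x ≤ P)
    (ht1 : ((d + 2 : ℝ) ^ 2 / (8 * R ^ 2)) * (Y0 / P) ^ (m - 1) * t ≤ 1 / 2)
    (ε : ℝ) (hε : 0 < ε) (hεR : ε ≤ R) :
    (5 / 4 * R ^ 2) * (25 / 4 * R ^ 2) ^ (-((d:ℝ) / 2)) * (Y0 / 2)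
      ≤ (∫ x in closedBall x₀ (5 / 2 * R), u (s0 + T1) x * fdeG x₀ R ε x)
        + T * ((T / t) ^ (m / (1 - m))
          * ∫ x in closedBall x₀ (5 / 2 * R), u (s0 + t) x ^ m * fdeGL x₀ ε x) := by
  have hT1 : 0 ≤ T1 := ht0.le.trans htT1
  have hT : 0 < T := by linarith
  have h1m : 0 < 1 - m := by linarith
  obtain ⟨v, hA, hvpos, hv0, hvc, hvD⟩ :=
    fde_super m T hm0 hm1 Ω hΩ u hu x₀ R hR hsub s0 T1 hs0 hT1 hsT
  obtain ⟨hψc, hψ0, -, -, -⟩ := fde_psi_basic x₀ R hR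
  obtain ⟨hGc, hG0, hGs, hGψ, hLc, hL0⟩ := fde_G_basic x₀ R ε hR hε hεR
  obtain ⟨hYc, hYd⟩ := fde_Ydini m hm0 x₀ R hR T1 v hvpos hvc hvD (fdeG x₀ R ε)
    (fdeGL x₀ ε) hGc hG0 hGs hLc.continuousOn (fde_G_DL x₀ R ε hR hε hεR)
  set K := closedBall x₀ (3 * R) with hK
  set K' := closedBall x₀ (5 / 2 * R) with hK'
  have hsub2 : K' ⊆ K := closedBall_subset_closedBall (by linarith)
  have hKm' : MeasurableSet K' := measurableSet_closedBall
  have hKc' : IsCompact K' := isCompact_closedBall _ _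
  have htI : t ∈ Icc 0 T1 := ⟨ht0.le, htT1⟩
  have hm := fde_mass m hm0 hm1 x₀ R hR T1 v hvpos hvc hvD Y0 P t (by
    rw [hY0]
    apply setIntegral_congr_fun hKm'
    intro x hx
    simp only [hv0 x (hsub2 hx)]) hY0p hP hψP htI ht1
  rw [← hK'] at hm
  have cv : ∀ s ∈ Icc 0 T1, ContinuousOn (v s) K' := fun s hs =>
    hvc.comp (f := fun x => (s, x)) (by fun_prop) (fun x hx => ⟨hs, hsub2 hx⟩)
  have cu : ∀ s ∈ Icc 0 T1, ContinuousOn (u (s0 + s)) K' := fun s hs =>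
    hu.2.1.continuousOn.comp (f := fun x => (s0 + s, x)) (by fun_prop)
      (fun x hx => ⟨⟨by linarith [hs.1], by linarith [hs.2]⟩, hsub (hsub2 hx)⟩)
  have hupos : ∀ s ∈ Icc 0 T1, ∀ x ∈ K', 0 < u (s0 + s) x := fun s hs x hx =>
    hu.1 (s0 + s, x) ⟨⟨by linarith [hs.1], by linarith [hs.2]⟩, hsub (hsub2 hx)⟩
  have cum : ContinuousOn (fun x => u (s0 + t) x ^ m) K' :=
    (cu t htI).rpow_const fun x hx => Or.inl (hupos t htI x hx).ne'
  have iuL : IntegrableOn (fun x => u (s0 + t) x ^ m * fdeGL x₀ ε x) K' :=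
    (cum.mul hLc.continuousOn).integrableOn_compact hKc'
  set J := ∫ x in K', u (s0 + t) x ^ m * fdeGL x₀ ε x with hJ
  have hJ0 : 0 ≤ J := setIntegral_nonneg hKm' fun x hx =>
    mul_nonneg (Real.rpow_nonneg (hupos t htI x hx).le _) (hL0 x)
  set q := (T / t) ^ (m / (1 - m)) with hq
  have hq0 : 0 < q := Real.rpow_pos_of_pos (by positivity) _
  have key := fde_dini (fun τ => ∫ x in K', v τ x * fdeG x₀ R ε x) t T1 (q * J) htT1
    (by positivity) (hYc.mono (Icc_subset_Icc_left ht0.le)) ?_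
  · have b1 : ∫ x in K', v T1 x * fdeG x₀ R ε x ≤ ∫ x in K', u (s0 + T1) x * fdeG x₀ R ε x := by
      have hI : T1 ∈ Icc 0 T1 := ⟨hT1, le_rfl⟩
      apply setIntegral_mono_on
        (((cv _ hI).mul hGc.continuousOn).integrableOn_compact hKc')
        (((cu _ hI).mul hGc.continuousOn).integrableOn_compact hKc') hKm'
      intro x hx
      have := hA T1 hI x (hsub2 hx) 1 (by simp)
      simp only [Real.one_rpow, one_mul] at this
      exact mul_le_mul_of_nonneg_right this (hG0 x)
    have b2 : (5 / 4 * R ^ 2) * (25 / 4 * R ^ 2) ^ (-((d:ℝ) / 2))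
        * (∫ x in K', v t x * fdePsi x₀ R x) ≤ ∫ x in K', v t x * fdeG x₀ R ε x := by
      rw [← integral_const_mul]
      apply setIntegral_mono_on
        ((((cv _ htI).mul hψc.continuousOn).integrableOn_compact hKc').const_mul _)
        (((cv _ htI).mul hGc.continuousOn).integrableOn_compact hKc') hKm'
      intro x hx
      have h1 := hvpos t htI x (hsub2 hx)
      calc (5 / 4 * R ^ 2) * (25 / 4 * R ^ 2) ^ (-((d:ℝ) / 2)) * (v t x * fdePsi x₀ R x)
          = v t x * ((5 / 4 * R ^ 2) * (25 / 4 * R ^ 2) ^ (-((d:ℝ) / 2)) * fdePsi x₀ R x) := by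
            ring
        _ ≤ _ := mul_le_mul_of_nonneg_left (hGψ x) h1.le
    have b3 : (5 / 4 * R ^ 2) * (25 / 4 * R ^ 2) ^ (-((d:ℝ) / 2)) * (Y0 / 2)
        ≤ (5 / 4 * R ^ 2) * (25 / 4 * R ^ 2) ^ (-((d:ℝ) / 2))
        * (∫ x in K', v t x * fdePsi x₀ R x) := by gcongr
    have b4 : q * J * (T1 - t) ≤ q * J * T := by gcongr; linarith
    linarith
  intro τ hτ _ e he
  have hτ0 : 0 < τ := ht0.trans hτ.1
  have hτI : τ ∈ Icc 0 T1 := ⟨hτ0.le, hτ.2⟩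
  obtain ⟨h0', hh0, hh⟩ := hYd τ ⟨hτ0, hτ.2⟩ e he
  refine ⟨h0', hh0, fun h hp hlt hle2 => ?_⟩
  refine le_trans ?_ (hh h hp hlt (by linarith))
  have cvm : ContinuousOn (fun x => v τ x ^ m) K' :=
    (cv τ hτI).rpow_const fun x hx => Or.inl (hvpos τ hτI x (hsub2 hx)).ne'
  have bound : ∫ x in K', v τ x ^ m * fdeGL x₀ ε x ≤ q * J := by
    rw [hJ, ← integral_const_mul]
    apply setIntegral_mono_on ((cvm.mul hLc.continuousOn).integrableOn_compact hKc')
      (iuL.const_mul _) hKm'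
    intro x hx
    rw [← mul_assoc]
    refine mul_le_mul_of_nonneg_right ?_ (hL0 x)
    have hl := hA τ hτI x (hsub2 hx) (t / τ) ⟨by positivity, by
      rw [div_le_one hτ0]; exact hτ.1.le⟩
    have e1 : t / τ * τ = t := by field_simp
    rw [e1] at hl
    have e2 : (t / τ) ^ (-(1 / (1 - m))) = (τ / t) ^ (1 / (1 - m)) := by
      rw [Real.rpow_neg (by positivity), ← Real.inv_rpow (by positivity), inv_div]
    rw [e2] at hl
    have h2 := hupos t htI x hx
    calc v τ x ^ m ≤ ((τ / t) ^ (1 / (1 - m)) * u (s0 + t) x) ^ m :=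
          Real.rpow_le_rpow (hvpos τ hτI x (hsub2 hx)).le hl hm0.le
      _ = (τ / t) ^ (m / (1 - m)) * u (s0 + t) x ^ m := by
          rw [Real.mul_rpow (by positivity) h2.le, ← Real.rpow_mul (by positivity)]
          congr 2; ring
      _ ≤ q * u (s0 + t) x ^ m := by
          have : 0 ≤ u (s0 + t) x ^ m := Real.rpow_nonneg h2.le _
          gcongr
          rw [hq]
          apply Real.rpow_le_rpow (by positivity) _ (by positivity)
          have : τ ≤ T := by linarith [hτ.2]
          gcongr
  nlinarith

noncomputable def fdeRho (d : ℕ) (y : EuclideanSpace ℝ (Fin d)) : ℝ :=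
  2 * d * (1 + ‖y‖ ^ 2) ^ (-((d : ℝ) / 2) - 1)

lemma fde_rho_pos (d : ℕ) (hd : 1 ≤ d) (y : EuclideanSpace ℝ (Fin d)) : 0 < fdeRho d y := by
  unfold fdeRho
  have : (0:ℝ) < d := by exact_mod_cast hd
  have : 0 < (1 + ‖y‖ ^ 2) ^ (-((d : ℝ) / 2) - 1) := Real.rpow_pos_of_pos (by positivity) _
  positivity

lemma fde_rho_int (d : ℕ) : Integrable (fdeRho d) := by
  have h := integrable_rpow_neg_one_add_norm_sq (E := EuclideanSpace ℝ (Fin d))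
    (μ := volume) (r := (d:ℝ) + 2) (by simp)
  have h2 := h.const_mul (2 * (d:ℝ))
  refine h2.congr (Filter.Eventually.of_forall fun y => ?_)
  simp only [fdeRho]
  congr 2; ring

lemma fde_rho_integral_pos (d : ℕ) (hd : 1 ≤ d) : 0 < ∫ y, fdeRho d y := by
  rw [integral_pos_iff_support_of_nonneg (fun y => (fde_rho_pos d hd y).le) (fde_rho_int d)]
  have : Function.support (fdeRho d) = univ := by
    ext y; simp [(fde_rho_pos d hd y).ne']
  rw [this]
  exact Measure.measure_univ_pos.2 (NeZero.ne _)

lemma fde_rho_scale {d : ℕ} (x₀ x : EuclideanSpace ℝ (Fin d)) (c : ℝ) (hc : 0 < c) :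
    fdeGL x₀ c⁻¹ x = c ^ d * fdeRho d (c • (x₀ - x)) := by
  unfold fdeGL fdeRho
  have h1 : ‖x - x₀‖ ^ 2 + c⁻¹ ^ 2 = (c ^ 2)⁻¹ * (1 + ‖c • (x₀ - x)‖ ^ 2) := by
    rw [norm_smul, mul_pow, Real.norm_eq_abs, sq_abs, norm_sub_rev]
    field_simp
    ring
  have h2 : ((c ^ 2)⁻¹ : ℝ) ^ (-((d : ℝ) / 2) - 1) = c ^ d * c ^ 2 := by
    rw [← Real.rpow_natCast c 2, ← Real.rpow_natCast c d, ← Real.rpow_neg hc.le,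
      ← Real.rpow_mul hc.le, ← Real.rpow_add hc]
    congr 1; push_cast; ring
  rw [h1, Real.mul_rpow (by positivity) (by positivity), h2]
  field_simp

lemma fde_rho_tail (d : ℕ) : Filter.Tendsto (fun x : EuclideanSpace ℝ (Fin d) =>
    ‖x‖ ^ d * fdeRho d x) (Bornology.cobounded _) (nhds 0) := by
  have h1 : Filter.Tendsto (fun x : EuclideanSpace ℝ (Fin d) => 2 * (d:ℝ) * (1 + ‖x‖ ^ 2)⁻¹)
      (Bornology.cobounded _) (nhds (2 * d * 0)) := by
    refine Filter.Tendsto.const_mul _ (Filter.Tendsto.inv_tendsto_atTop ?_)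
    refine Filter.tendsto_atTop_add_const_left _ _ ?_
    exact (Filter.tendsto_pow_atTop two_ne_zero).comp tendsto_norm_cobounded_atTop
  rw [mul_zero] at h1
  refine squeeze_zero (fun x => ?_) (fun x => ?_) h1
  · have : 0 ≤ (1 + ‖x‖ ^ 2) ^ (-((d : ℝ) / 2) - 1) := Real.rpow_nonneg (by positivity) _
    unfold fdeRho
    positivity
  · unfold fdeRho
    have hp : 0 < 1 + ‖x‖ ^ 2 := by positivity
    have h2 : ‖x‖ ^ d ≤ (1 + ‖x‖ ^ 2) ^ ((d:ℝ) / 2) := by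
      calc ‖x‖ ^ d = (‖x‖ ^ 2) ^ ((d:ℝ) / 2) := by
            rw [← Real.rpow_natCast ‖x‖ 2, ← Real.rpow_mul (norm_nonneg _),
              ← Real.rpow_natCast]
            congr 1; push_cast; ring
        _ ≤ _ := Real.rpow_le_rpow (by positivity) (by linarith) (by positivity)
    have h3 : 0 < (1 + ‖x‖ ^ 2) ^ (-((d : ℝ) / 2) - 1) := Real.rpow_pos_of_pos hp _
    calc ‖x‖ ^ d * (2 * d * (1 + ‖x‖ ^ 2) ^ (-((d : ℝ) / 2) - 1))
        ≤ (1 + ‖x‖ ^ 2) ^ ((d:ℝ) / 2) * (2 * d * (1 + ‖x‖ ^ 2) ^ (-((d : ℝ) / 2) - 1)) := by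
          gcongr
      _ = 2 * d * ((1 + ‖x‖ ^ 2) ^ ((d:ℝ) / 2) * (1 + ‖x‖ ^ 2) ^ (-((d : ℝ) / 2) - 1)) := by ring
      _ = _ := by
          rw [← Real.rpow_add hp, ← Real.rpow_neg_one]
          congr 2; ring

lemma fde_approx {d : ℕ} (hd : 1 ≤ d) (x₀ : EuclideanSpace ℝ (Fin d)) (R : ℝ) (hR : 0 < R)
    (g : EuclideanSpace ℝ (Fin d) → ℝ) (hg : ContinuousOn g (closedBall x₀ (5 / 2 * R))) :
    Filter.Tendsto (fun c : ℝ => ∫ x in closedBall x₀ (5 / 2 * R), g x * fdeGL x₀ c⁻¹ x)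
      Filter.atTop (nhds ((∫ y, fdeRho d y) * g x₀)) := by
  set K' := closedBall x₀ (5 / 2 * R) with hK'
  have hKm' : MeasurableSet K' := measurableSet_closedBall
  set D := ∫ y, fdeRho d y with hD
  have hDp : 0 < D := fde_rho_integral_pos d hd
  have hnb : K' ∈ nhds x₀ := closedBall_mem_nhds _ (by positivity)
  have hx : x₀ ∈ K' := mem_of_mem_nhds hnb
  have h1 := tendsto_integral_comp_smul_smul_of_integrable' (F := EuclideanSpace ℝ (Fin d))
    (μ := volume) (φ := fun y => D⁻¹ * fdeRho d y) (g := K'.indicator g) (x₀ := x₀)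
    (fun y => mul_nonneg (by positivity) (fde_rho_pos d hd y).le)
    (by rw [integral_const_mul, ← hD]; field_simp)
    (by
      have := (fde_rho_tail d).const_mul D⁻¹
      rw [mul_zero] at this
      refine this.congr fun x => ?_
      simp only [finrank_euclideanSpace, Fintype.card_fin]; ring)
    ((hg.integrableOn_compact (isCompact_closedBall _ _)).integrable_indicator hKm')
    (by
      have h2 : ContinuousAt g x₀ := hg.continuousAt hnb
      refine h2.congr ?_
      filter_upwards [hnb] with x hx
      rw [indicator_of_mem hx])
  rw [indicator_of_mem hx] at h1
  refine (h1.const_mul D).congr' ?_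
  filter_upwards [Filter.eventually_gt_atTop 0] with c hc
  rw [← integral_const_mul, ← integral_indicator hKm']
  congr 1
  ext x
  by_cases hxK : x ∈ K'
  · rw [indicator_of_mem hxK, indicator_of_mem hxK, fde_rho_scale x₀ x c hc]
    simp only [finrank_euclideanSpace, Fintype.card_fin, smul_eq_mul]
    field_simp
  · rw [indicator_of_notMem hxK, indicator_of_notMem hxK]; simp

lemma fde_lims {d : ℕ} (T : ℝ) (hT : 0 < T)
    (Ω : Set (EuclideanSpace ℝ (Fin d)))
    (u : ℝ → EuclideanSpace ℝ (Fin d) → ℝ) (u₀ : EuclideanSpace ℝ (Fin d) → ℝ)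
    (hi : TakesInit T Ω u u₀) (he : ExtinctAt T Ω u)
    (K : Set (EuclideanSpace ℝ (Fin d))) (hK : IsCompact K) (hKm : MeasurableSet K)
    (hsub : K ⊆ Ω) (φ : EuclideanSpace ℝ (Fin d) → ℝ) (hφ : Continuous φ) :
    Filter.Tendsto (fun s => ∫ x in K, u s x * φ x) (nhdsWithin T (Iio T)) (nhds 0) ∧
    Filter.Tendsto (fun s => ∫ x in K, u s x * φ x) (nhdsWithin 0 (Ioi 0))
      (nhds (∫ x in K, u₀ x * φ x)) := by
  constructor
  · have h := fde_cont_int volume K hK hKm (T / 2) T (fun s x => u s x * φ x)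
      ((he.1.mono (prod_mono (fun s hs => ⟨by linarith [hs.1], hs.2⟩) hsub)).mul (by fun_prop))
    have h2 := h T ⟨by linarith, le_rfl⟩
    have h3 : ∫ x in K, u T x * φ x = 0 := by
      rw [setIntegral_congr_fun (g := fun _ => 0) hKm]
      · simp
      · intro x hx
        simp only [he.2.1 x (hsub hx), zero_mul]
    unfold ContinuousWithinAt at h2
    simp only [h3] at h2
    refine h2.mono_left ?_
    rw [← nhdsWithin_Ioo_eq_nhdsLT (by linarith : T / 2 < T)]
    exact nhdsWithin_mono _ Ioo_subset_Icc_self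
  · have h := fde_cont_int volume K hK hKm 0 (T / 2) (fun s x => u s x * φ x)
      ((hi.1.mono (prod_mono (fun s hs => ⟨hs.1, by linarith [hs.2]⟩) hsub)).mul (by fun_prop))
    have h2 := h 0 ⟨le_rfl, by linarith⟩
    have h3 : ∫ x in K, u 0 x * φ x = ∫ x in K, u₀ x * φ x := by
      apply setIntegral_congr_fun hKm
      intro x hx
      simp only [hi.2 x (hsub hx)]
    unfold ContinuousWithinAt at h2
    simp only [h3] at h2
    refine h2.mono_left ?_
    rw [← nhdsWithin_Ioo_eq_nhdsGT (by linarith : 0 < T / 2)]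
    exact nhdsWithin_mono _ Ioo_subset_Icc_self

lemma fde_cond (Λ A t m : ℝ) (hA : 0 < A) (h : 2 * Λ * t ≤ A ^ (1 - m)) :
    Λ * A ^ (m - 1) * t ≤ 1 / 2 := by
  have e : A ^ (m - 1) = (A ^ (1 - m))⁻¹ := by
    rw [← Real.rpow_neg hA.le]; congr 1; ring
  have hp : 0 < A ^ (1 - m) := Real.rpow_pos_of_pos hA _
  rw [e, show Λ * (A ^ (1 - m))⁻¹ * t = (Λ * t) / A ^ (1 - m) by ring, div_le_iff₀ hp]
  linarith

lemma fde_Tbound {d : ℕ} (m T : ℝ) (hm0 : 0 < m) (hm1 : m < 1) (hT : 0 < T)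
    (Ω : Set (EuclideanSpace ℝ (Fin d))) (hΩ : IsOpen Ω)
    (u : ℝ → EuclideanSpace ℝ (Fin d) → ℝ) (u₀ : EuclideanSpace ℝ (Fin d) → ℝ)
    (hu : IsFDESol m (Ioo 0 T ×ˢ Ω) u)
    (hi : TakesInit T Ω u u₀) (he : ExtinctAt T Ω u)
    (x₀ : EuclideanSpace ℝ (Fin d)) (R : ℝ) (hR : 0 < R) (hsub : closedBall x₀ (3 * R) ⊆ Ω)
    (P : ℝ) (hP : 0 < P) (hψP : ∫ x in closedBall x₀ (5 / 2 * R), fdePsi x₀ R x ≤ P)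
    (hJ : 0 < ∫ x in closedBall x₀ (5 / 2 * R), u₀ x * fdePsi x₀ R x) :
    ((∫ x in closedBall x₀ (5 / 2 * R), u₀ x * fdePsi x₀ R x) / P) ^ (1 - m)
      ≤ 2 * ((d + 2 : ℝ) ^ 2 / (8 * R ^ 2)) * T := by
  have hsub2 : closedBall x₀ (5 / 2 * R) ⊆ Ω :=
    (closedBall_subset_closedBall (by linarith)).trans hsub
  obtain ⟨hl1, hl2⟩ := fde_lims T hT Ω u u₀ hi he _ (isCompact_closedBall x₀ (5 / 2 * R))
    measurableSet_closedBall hsub2 (fdePsi x₀ R) (fde_psi_basic x₀ R hR).1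
  have hΛ : 0 < ((d + 2 : ℝ) ^ 2 / (8 * R ^ 2)) := by positivity
  have h3 := (hl2.div_const P).rpow_const (p := 1 - m) (Or.inr (by linarith))
  refine le_of_tendsto h3 ?_
  filter_upwards [hl2.eventually (lt_mem_nhds hJ), Ioo_mem_nhdsGT hT] with s hs hsI
  by_contra! hcon
  have key : ∀ s' ∈ Ioo s T, (∫ x in closedBall x₀ (5 / 2 * R), u s x * fdePsi x₀ R x) / 2
      ≤ ∫ x in closedBall x₀ (5 / 2 * R), u s' x * fdePsi x₀ R x := by
    intro s' hs'
    have := fde_mass_u m T hm0 hm1 Ω hΩ u hu x₀ R hR hsub s (s' - s) hsI.1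
      (by linarith [hs'.1]) (by linarith [hs'.2]) _ P rfl hs hP hψP
      (fde_cond _ _ _ _ (by positivity) (le_trans (by
        have := hs'.2
        have := hsI.1
        gcongr; linarith) hcon.le))
    rwa [add_sub_cancel] at this
  have : (∫ x in closedBall x₀ (5 / 2 * R), u s x * fdePsi x₀ R x) / 2 ≤ 0 := by
    refine ge_of_tendsto hl1 ?_
    filter_upwards [Ioo_mem_nhdsLT hsI.2] with s' hs'
    exact key s' hs'
  linarith

lemma fde_lower {d : ℕ} (hd : 1 ≤ d) (m T : ℝ) (hm0 : 0 < m) (hm1 : m < 1) (hT : 0 < T)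
    (Ω : Set (EuclideanSpace ℝ (Fin d))) (hΩ : IsOpen Ω)
    (u : ℝ → EuclideanSpace ℝ (Fin d) → ℝ) (u₀ : EuclideanSpace ℝ (Fin d) → ℝ)
    (hu : IsFDESol m (Ioo 0 T ×ˢ Ω) u)
    (hi : TakesInit T Ω u u₀) (he : ExtinctAt T Ω u)
    (x₀ : EuclideanSpace ℝ (Fin d)) (R : ℝ) (hR : 0 < R) (hsub : closedBall x₀ (3 * R) ⊆ Ω)
    (P : ℝ) (hP : 0 < P) (hψP : ∫ x in closedBall x₀ (5 / 2 * R), fdePsi x₀ R x ≤ P)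
    (hJ : 0 < ∫ x in closedBall x₀ (5 / 2 * R), u₀ x * fdePsi x₀ R x)
    (t : ℝ) (ht0 : 0 < t) (htT : t < T)
    (ht : 2 * ((d + 2 : ℝ) ^ 2 / (8 * R ^ 2)) * t
      < ((∫ x in closedBall x₀ (5 / 2 * R), u₀ x * fdePsi x₀ R x) / P) ^ (1 - m)) :
    (5 / 4 * R ^ 2) * (25 / 4 * R ^ 2) ^ (-((d:ℝ) / 2))
        * ((∫ x in closedBall x₀ (5 / 2 * R), u₀ x * fdePsi x₀ R x) / 2)
      ≤ T * ((T / t) ^ (m / (1 - m)) * ((∫ y, fdeRho d y) * u t x₀ ^ m)) := by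
  have hx₀ : x₀ ∈ closedBall x₀ (5 / 2 * R) := mem_closedBall_self (by positivity)
  have hsub2 : closedBall x₀ (5 / 2 * R) ⊆ Ω :=
    (closedBall_subset_closedBall (by linarith)).trans hsub
  have hKc : IsCompact (closedBall x₀ (5 / 2 * R)) := isCompact_closedBall _ _
  obtain ⟨-, hl2⟩ := fde_lims T hT Ω u u₀ hi he _ hKc
    measurableSet_closedBall hsub2 (fdePsi x₀ R) (fde_psi_basic x₀ R hR).1
  have h3 := (hl2.div_const P).rpow_const (p := 1 - m) (Or.inr (by linarith))
  have hux : Filter.Tendsto (fun s => u (s + t) x₀) (nhdsWithin 0 (Ioi 0)) (nhds (u t x₀)) := by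
    have hopen : Ioo 0 T ×ˢ Ω ∈ nhds (t, x₀) :=
      (isOpen_Ioo.prod hΩ).mem_nhds ⟨⟨ht0, htT⟩, hsub2 hx₀⟩
    have h4 : ContinuousAt (fun p : ℝ × EuclideanSpace ℝ (Fin d) => u p.1 p.2) (t, x₀) :=
      hu.2.1.continuousOn.continuousAt hopen
    have h5 : ContinuousAt (fun s : ℝ => u (s + t) x₀) 0 :=
      ContinuousAt.comp (f := fun s : ℝ => (s + t, x₀))
        (g := fun p : ℝ × EuclideanSpace ℝ (Fin d) => u p.1 p.2)
        (by simpa using h4) (by fun_prop)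
    have h6 := h5.tendsto
    rw [zero_add] at h6
    exact h6.mono_left nhdsWithin_le_nhds
  refine le_of_tendsto_of_tendsto ((hl2.div_const 2).const_mul _)
    ((((hux.rpow_const (p := m) (Or.inr hm0.le)).const_mul _).const_mul _).const_mul _) ?_
  filter_upwards [hl2.eventually (lt_mem_nhds hJ), h3.eventually (lt_mem_nhds ht),
    Ioo_mem_nhdsGT (show 0 < T - t by linarith)] with s hs hst hsI
  have hst0 : 0 < s + t := by linarith [hsI.1]
  have hstT : s + t < T := by linarith [hsI.2]
  have hpos : ∀ x ∈ closedBall x₀ (5 / 2 * R), 0 < u (s + t) x := fun x hx =>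
    hu.1 (s + t, x) ⟨⟨hst0, hstT⟩, hsub2 hx⟩
  have cu : ContinuousOn (fun x => u (s + t) x ^ m) (closedBall x₀ (5 / 2 * R)) :=
    (hu.2.1.continuousOn.comp (f := fun x => (s + t, x)) (by fun_prop)
      (fun x hx => ⟨⟨hst0, hstT⟩, hsub2 hx⟩)).rpow_const fun x hx => Or.inl (hpos x hx).ne'
  have happ := fde_approx hd x₀ R hR _ cu
  refine ge_of_tendsto ((happ.const_mul _).const_mul _) ?_
  filter_upwards [Filter.eventually_ge_atTop R⁻¹] with c hc
  have hcp : 0 < c := (inv_pos.2 hR).trans_le hc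
  have hcR : c⁻¹ ≤ R := inv_le_of_inv_le₀ hR hc
  obtain ⟨hG, -⟩ := fde_lims T hT Ω u u₀ hi he _ hKc
    measurableSet_closedBall hsub2 (fdeG x₀ R c⁻¹)
    (fde_G_basic x₀ R c⁻¹ hR (by positivity) hcR).1
  have hG2 := hG.add_const (T * ((T / t) ^ (m / (1 - m))
          * ∫ x in closedBall x₀ (5 / 2 * R), u (s + t) x ^ m * fdeGL x₀ c⁻¹ x))
  rw [zero_add] at hG2
  refine ge_of_tendsto hG2 ?_
  filter_upwards [Ioo_mem_nhdsLT hstT] with s' hs'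
  have := fde_green m T hm0 hm1 Ω hΩ u hu x₀ R hR hsub s (s' - s) t hsI.1 ht0
    (by linarith [hs'.1]) (by linarith [hs'.2]) _ P rfl hs hP hψP
    (fde_cond _ _ _ _ (by positivity) hst.le) c⁻¹ (by positivity) hcR
  rwa [add_sub_cancel] at this

lemma fde_P {d : ℕ} (x₀ : EuclideanSpace ℝ (Fin d)) (R : ℝ) (hR : 0 < R) :
    ∫ x in closedBall x₀ (5 / 2 * R), fdePsi x₀ R x
      ≤ (volume (ball (0 : EuclideanSpace ℝ (Fin d)) 1)).toReal * 2 ^ d * R ^ d := by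
  obtain ⟨hc, h0, h1, hs, -⟩ := fde_psi_basic x₀ R hR
  have hsub : closedBall x₀ (2 * R) ⊆ closedBall x₀ (5 / 2 * R) :=
    closedBall_subset_closedBall (by linarith)
  have e1 : ∫ x in closedBall x₀ (5 / 2 * R), fdePsi x₀ R x
      = ∫ x in closedBall x₀ (2 * R), fdePsi x₀ R x :=
    setIntegral_eq_of_subset_of_forall_sdiff_eq_zero measurableSet_closedBall hsub
      fun x hx => hs x hx.2
  rw [e1]
  calc ∫ x in closedBall x₀ (2 * R), fdePsi x₀ R x
      ≤ ∫ x in closedBall x₀ (2 * R), (1:ℝ) := by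
        apply setIntegral_mono_on (hc.continuousOn.integrableOn_compact (isCompact_closedBall _ _))
          (integrableOn_const (isCompact_closedBall _ _).measure_lt_top.ne) measurableSet_closedBall
        intro x _
        exact h1 x
    _ = _ := by
        rw [setIntegral_const, smul_eq_mul, mul_one, measureReal_def,
          Measure.addHaar_closedBall _ _ (by positivity), ENNReal.toReal_mul,
          ENNReal.toReal_ofReal (by positivity)]
        simp only [finrank_euclideanSpace, Fintype.card_fin]
        rw [mul_pow]; ring

lemma fde_J {d : ℕ} (x₀ : EuclideanSpace ℝ (Fin d)) (R : ℝ) (hR : 0 < R)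
    (u₀ : EuclideanSpace ℝ (Fin d) → ℝ) (hc : ContinuousOn u₀ (closedBall x₀ (5 / 2 * R)))
    (h0 : ∀ x ∈ closedBall x₀ (5 / 2 * R), 0 ≤ u₀ x) :
    9 / 16 * (∫ x in ball x₀ R, u₀ x)
      ≤ ∫ x in closedBall x₀ (5 / 2 * R), u₀ x * fdePsi x₀ R x := by
  obtain ⟨hψc, hψ0, -, -, h9⟩ := fde_psi_basic x₀ R hR
  have hsub : ball x₀ R ⊆ closedBall x₀ (5 / 2 * R) :=
    ball_subset_closedBall.trans (closedBall_subset_closedBall (by linarith))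
  have i1 : IntegrableOn (fun x => u₀ x * fdePsi x₀ R x) (closedBall x₀ (5 / 2 * R)) :=
    (hc.mul hψc.continuousOn).integrableOn_compact (isCompact_closedBall _ _)
  have i2 : IntegrableOn u₀ (closedBall x₀ (5 / 2 * R)) :=
    hc.integrableOn_compact (isCompact_closedBall _ _)
  calc 9 / 16 * (∫ x in ball x₀ R, u₀ x) = ∫ x in ball x₀ R, 9 / 16 * u₀ x := by
        rw [integral_const_mul]
    _ ≤ ∫ x in ball x₀ R, u₀ x * fdePsi x₀ R x := by
        apply setIntegral_mono_on ((i2.mono_set hsub).const_mul _) (i1.mono_set hsub)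
          measurableSet_ball
        intro x hx
        have := mul_le_mul_of_nonneg_left (h9 x hx) (h0 x (hsub hx))
        linarith
    _ ≤ _ := by
        apply setIntegral_mono_set i1
        · filter_upwards [ae_restrict_mem measurableSet_closedBall] with x hx
          exact mul_nonneg (h0 x hx) (hψ0 x)
        · exact hsub.eventuallyLE

/-- **Theorem 1.1, second part: quantitative positivity for small times.** -/
theorem fde_positivity_small_times
    (d : ℕ) (hd : 1 ≤ d) (m : ℝ) (hm0 : 0 < m) (hm1 : m < 1) :
    ∃ c₀' C₁' : ℝ, 0 < c₀' ∧ 0 < C₁' ∧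
      ∀ (Ω : Set (EuclideanSpace ℝ (Fin d))), IsOpen Ω →
      ∀ (u : ℝ → EuclideanSpace ℝ (Fin d) → ℝ) (u₀ : EuclideanSpace ℝ (Fin d) → ℝ) (T : ℝ),
        0 < T →
        IsFDESol m (Ioo 0 T ×ˢ Ω) u →
        (∀ x ∈ Ω, 0 ≤ u₀ x) →
        LocallyIntegrableOn u₀ Ω →
        TakesInit T Ω u u₀ →
        ExtinctAt T Ω u →
      ∀ (x₀ : EuclideanSpace ℝ (Fin d)) (R : ℝ), 0 < R →
        closedBall x₀ (3 * R) ⊆ Ω →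
        c₀' * R ^ (2 - d * (1 - m)) * (∫ x in ball x₀ R, u₀ x) ^ (1 - m) ≤ T ∧
        ∀ t : ℝ, 0 < t →
          t ≤ c₀' * R ^ (2 - d * (1 - m)) * (∫ x in ball x₀ R, u₀ x) ^ (1 - m) →
          u t x₀ ^ m ≥
            C₁' * R ^ (2 - (d : ℝ)) * (∫ x in ball x₀ R, u₀ x) *
              T ^ (-(1 / (1 - m))) * t ^ (m / (1 - m)) := by

  obtain ⟨κ, hκ⟩ : ∃ κ, κ = (volume (ball (0 : EuclideanSpace ℝ (Fin d)) 1)).toReal := ⟨_, rfl⟩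
  have hκp : 0 < κ := by
    rw [hκ]
    exact ENNReal.toReal_pos (measure_ball_pos _ _ one_pos).ne' measure_ball_lt_top.ne
  obtain ⟨D, hD⟩ : ∃ D, D = ∫ y, fdeRho d y := ⟨_, rfl⟩
  have hDp : 0 < D := hD ▸ fde_rho_integral_pos d hd
  have h1m : 0 < 1 - m := by linarith
  have hb : 0 < (9 / (16 * (κ * 2 ^ d))) ^ (1 - m) := Real.rpow_pos_of_pos (by positivity) _
  have hb2 : (0:ℝ) < (25 / 4 : ℝ) ^ (-((d:ℝ) / 2)) := Real.rpow_pos_of_pos (by positivity) _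
  refine ⟨2 / (d + 2) ^ 2 * (9 / (16 * (κ * 2 ^ d))) ^ (1 - m),
    5 / 4 * (25 / 4 : ℝ) ^ (-((d:ℝ) / 2)) * (9 / 32) / D, by positivity, by positivity, ?_⟩
  intro Ω hΩ u u₀ T hT hu hu0 _ hi he x₀ R hR hsub
  obtain ⟨I, hI⟩ : ∃ I, I = ∫ x in ball x₀ R, u₀ x := ⟨_, rfl⟩
  rw [← hI]
  have hsub2 : closedBall x₀ (5 / 2 * R) ⊆ Ω :=
    (closedBall_subset_closedBall (by linarith)).trans hsub
  have hsub3 : ball x₀ R ⊆ closedBall x₀ (5 / 2 * R) :=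
    ball_subset_closedBall.trans (closedBall_subset_closedBall (by linarith))
  have hI0 : 0 ≤ I := by
    rw [hI]
    exact setIntegral_nonneg measurableSet_ball fun x hx => hu0 x (hsub2 (hsub3 hx))
  rcases hI0.eq_or_lt with hI0 | hIp
  · rw [← hI0, Real.zero_rpow h1m.ne', mul_zero]
    exact ⟨hT.le, fun t h1 h2 => absurd h1 (not_lt.2 h2)⟩
  have hc0 : ContinuousOn u₀ (closedBall x₀ (5 / 2 * R)) := by
    have h1 : ContinuousOn (fun x => u 0 x) (closedBall x₀ (5 / 2 * R)) :=
      hi.1.comp (f := fun x => ((0:ℝ), x)) (by fun_prop)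
        (fun x hx => ⟨⟨le_rfl, hT⟩, hsub2 hx⟩)
    exact h1.congr fun x hx => (hi.2 x (hsub2 hx)).symm
  have hJI := fde_J x₀ R hR u₀ hc0 (fun x hx => hu0 x (hsub2 hx))
  have hψP := fde_P x₀ R hR
  rw [← hI] at hJI
  rw [← hκ] at hψP
  have hP : 0 < κ * 2 ^ d * R ^ d := by positivity
  have hJp : 0 < ∫ x in closedBall x₀ (5 / 2 * R), u₀ x * fdePsi x₀ R x :=
    lt_of_lt_of_le (by positivity) hJI
  have hTb := fde_Tbound m T hm0 hm1 hT Ω hΩ u u₀ hu hi he x₀ R hR hsub _ hP hψP hJp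
  have hlow := fde_lower hd m T hm0 hm1 hT Ω hΩ u u₀ hu hi he x₀ R hR hsub _ hP hψP hJp
  obtain ⟨J, hJ⟩ : ∃ J, J = ∫ x in closedBall x₀ (5 / 2 * R), u₀ x * fdePsi x₀ R x := ⟨_, rfl⟩
  rw [← hJ] at hTb hlow hJI hJp
  rw [← hD] at hlow
  obtain ⟨Z, hZ⟩ : ∃ Z, Z = (9 / 16 * I / (κ * 2 ^ d * R ^ d)) ^ (1 - m) := ⟨_, rfl⟩
  have hZp : 0 < Z := hZ ▸ Real.rpow_pos_of_pos (by positivity) _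
  have hZJ : Z ≤ (J / (κ * 2 ^ d * R ^ d)) ^ (1 - m) := by
    rw [hZ]
    apply Real.rpow_le_rpow (by positivity) _ h1m.le
    gcongr
  have hts : 2 / ((d:ℝ) + 2) ^ 2 * (9 / (16 * (κ * 2 ^ d))) ^ (1 - m) * R ^ (2 - d * (1 - m))
      * I ^ (1 - m) = 2 / ((d:ℝ) + 2) ^ 2 * R ^ 2 * Z := by
    have e1 : R ^ (2 - d * (1 - m)) = R ^ 2 * ((R ^ d)⁻¹) ^ (1 - m) := by
      rw [Real.rpow_sub hR, Real.rpow_two, Real.rpow_mul hR.le, Real.rpow_natCast,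
        Real.inv_rpow (by positivity)]
      rfl
    have e2 : Z = (9 / (16 * (κ * 2 ^ d))) ^ (1 - m) * ((R ^ d)⁻¹) ^ (1 - m) * I ^ (1 - m) := by
      rw [hZ, ← Real.mul_rpow (by positivity) (by positivity),
        ← Real.mul_rpow (by positivity) (by positivity)]
      congr 1
      field_simp
    rw [e1, e2]; ring
  rw [hts]
  have hΛ : ∀ s : ℝ, s ≤ 2 / ((d:ℝ) + 2) ^ 2 * R ^ 2 * Z →
      2 * ((d + 2 : ℝ) ^ 2 / (8 * R ^ 2)) * s < (J / (κ * 2 ^ d * R ^ d)) ^ (1 - m) := by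
    intro s hs
    refine lt_of_lt_of_le ?_ hZJ
    calc 2 * ((d + 2 : ℝ) ^ 2 / (8 * R ^ 2)) * s
        ≤ 2 * ((d + 2 : ℝ) ^ 2 / (8 * R ^ 2)) * (2 / ((d:ℝ) + 2) ^ 2 * R ^ 2 * Z) := by gcongr
      _ = Z / 2 := by field_simp; ring
      _ < Z := by linarith
  have hΛT : ∀ s : ℝ, s ≤ 2 / ((d:ℝ) + 2) ^ 2 * R ^ 2 * Z → s < T := by
    intro s hs
    have h1 := (hΛ s hs).trans_le hTb
    exact lt_of_mul_lt_mul_left h1 (by positivity)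
  refine ⟨(hΛT _ le_rfl).le, fun t ht0 ht => ?_⟩
  have H := hlow t ht0 (hΛT t ht) (hΛ t ht)
  have e3 : (5 / 4 * R ^ 2) * (25 / 4 * R ^ 2) ^ (-((d:ℝ) / 2))
      = 5 / 4 * (25 / 4 : ℝ) ^ (-((d:ℝ) / 2)) * R ^ (2 - (d:ℝ)) := by
    rw [Real.mul_rpow (by positivity) (by positivity), Real.rpow_sub hR, Real.rpow_two]
    have : (R ^ 2) ^ (-((d:ℝ) / 2)) = (R ^ (d:ℝ))⁻¹ := by
      rw [← Real.rpow_two, ← Real.rpow_mul hR.le, ← Real.rpow_neg hR.le]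
      congr 1; ring
    rw [this]; ring
  rw [e3] at H
  obtain ⟨W, hW⟩ : ∃ W, W = T ^ (-(1 / (1 - m))) * t ^ (m / (1 - m)) := ⟨_, rfl⟩
  have hWp : 0 < W := by
    rw [hW]; exact mul_pos (Real.rpow_pos_of_pos hT _) (Real.rpow_pos_of_pos ht0 _)
  have hWT : T * (T / t) ^ (m / (1 - m)) * W = 1 := by
    have htp : 0 < t ^ (m / (1 - m)) := Real.rpow_pos_of_pos ht0 _
    have hTp : 0 < T ^ (m / (1 - m)) := Real.rpow_pos_of_pos hT _
    have e5 : T ^ (-(1 / (1 - m))) = (T ^ (m / (1 - m)))⁻¹ * T⁻¹ := by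
      rw [← Real.rpow_neg hT.le, ← Real.rpow_neg_one T, ← Real.rpow_add hT]
      congr 1; field_simp; ring
    rw [hW, e5, Real.div_rpow hT.le ht0.le]
    field_simp
  have hRp : 0 < R ^ (2 - (d:ℝ)) := Real.rpow_pos_of_pos hR _
  calc 5 / 4 * (25 / 4 : ℝ) ^ (-((d:ℝ) / 2)) * (9 / 32) / D * R ^ (2 - (d:ℝ)) * I
        * T ^ (-(1 / (1 - m))) * t ^ (m / (1 - m))
      = (5 / 4 * (25 / 4 : ℝ) ^ (-((d:ℝ) / 2)) * R ^ (2 - (d:ℝ)) * ((9 / 16 * I) / 2))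
        * (W / D) := by rw [hW]; ring
    _ ≤ (5 / 4 * (25 / 4 : ℝ) ^ (-((d:ℝ) / 2)) * R ^ (2 - (d:ℝ)) * (J / 2)) * (W / D) := by
        gcongr
    _ ≤ (T * ((T / t) ^ (m / (1 - m)) * (D * u t x₀ ^ m))) * (W / D) := by gcongr
    _ = (T * (T / t) ^ (m / (1 - m)) * W) * u t x₀ ^ m := by field_simp
    _ = _ := by rw [hWT, one_mul]
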